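/- arXiv:2602.15471 — 2 statements merged into one kernel-verified Lean document; each statement's English description precedes it below -/
import Mathlib

section
/- Let u ∈ C²(closed 𝔻) be a solution of (P_ε). Then the following Kazdan–Warner type identity holds: ∫_{∂𝔻} [ 4x₂ ∂_τh_ε(x) e^{u/2} − 2x₁(h̃_ε − 1)u ] = ∫_𝔻 [ 4x₁ K̃_ε u + e^{u} ∇K_ε(x)·F(x) ], where F(x₁,x₂) = (1 − x₁² + x₂², −2x₁x₂). -/
open MeasureTheory Real Filter

noncomputable section

/-- The open unit disk in ℝ² ≅ ℂ. -/
def unitDisk : Set ℂ := Metric.ball 0 1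

/-- The unit circle ∂𝔻. -/
def unitCircle : Set ℂ := Metric.sphere 0 1

/-- The closed unit disk. -/
def closedUnitDisk : Set ℂ := Metric.closedBall 0 1

/-- Directional derivative of `u` at `x` in direction `v`. -/
def pd (u : ℂ → ℝ) (v x : ℂ) : ℝ := fderiv ℝ u x v

/-- Laplacian of `u` at `x`. -/
def lap (u : ℂ → ℝ) (x : ℂ) : ℝ :=
  fderiv ℝ (fun y => pd u 1 y) x 1 + fderiv ℝ (fun y => pd u Complex.I y) x Complex.I

/-- Squared norm of the gradient, |∇u|². -/
def gradSq (u : ℂ → ℝ) (x : ℂ) : ℝ := pd u 1 x ^ 2 + pd u Complex.I x ^ 2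

/-- Outward normal derivative ∂_ν u(x) = ∇u(x)·x at a boundary point. -/
def nderiv (u : ℂ → ℝ) (x : ℂ) : ℝ := x.re * pd u 1 x + x.im * pd u Complex.I x

/-- Tangential derivative ∂_τ u(x) = ∇u(x)·(−x₂,x₁) at a boundary point. -/
def tderiv (u : ℂ → ℝ) (x : ℂ) : ℝ := -x.im * pd u 1 x + x.re * pd u Complex.I x

/-- Unit-speed parametrization of the unit circle. -/
def bpt (θ : ℝ) : ℂ := Complex.exp ((θ : ℂ) * Complex.I)

/-- Integral over ∂𝔻 with respect to arclength. -/
def bint (f : ℂ → ℝ) : ℝ := ∫ θ in (0:ℝ)..(2 * π), f (bpt θ)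

/-- A solution of the prescribed curvature problem for `(K, h)`. -/
def IsSolution (K h u : ℂ → ℝ) : Prop :=
  ContDiff ℝ 2 u ∧
  (∀ x ∈ unitDisk, -lap u x = 2 * K x * Real.exp (u x)) ∧
  (∀ x ∈ unitCircle, nderiv u x + 2 = 2 * h x * Real.exp (u x / 2))

/-- The auxiliary function Φ = H + √(H² + K). -/
def Phi (K H : ℂ → ℝ) (x : ℂ) : ℝ := H x + Real.sqrt (H x ^ 2 + K x)

/-- `H` is the harmonic extension of `h`, C¹ up to the boundary. -/
def IsHarmExt (h H : ℂ → ℝ) : Prop :=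
  ContDiff ℝ 1 H ∧ ContDiffOn ℝ 2 H unitDisk ∧
  (∀ x ∈ unitDisk, lap H x = 0) ∧ ∀ x ∈ unitCircle, H x = h x

/-- K_ε. -/
def Keps (K : ℂ → ℝ) (ε : ℝ) (x : ℂ) : ℝ := (K x - ε / 2) / (1 + ε)

/-- h_ε. -/
def heps (h : ℂ → ℝ) (ε : ℝ) (x : ℂ) : ℝ := h x / (1 + ε)

/-- K̃_ε. -/
def Ktil (ε : ℝ) : ℝ := -ε / (2 * (1 + ε))

/-- h̃_ε. -/
def htil (ε : ℝ) : ℝ := 1 / (1 + ε)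

/-- A solution of the perturbed problem (P_ε). -/
def IsPerturbedSolution (K h : ℂ → ℝ) (ε : ℝ) (u : ℂ → ℝ) : Prop :=
  ContDiff ℝ 2 u ∧
  (∀ x ∈ unitDisk, -lap u x + 2 * Ktil ε = 2 * Keps K ε x * Real.exp (u x)) ∧
  (∀ x ∈ unitCircle, nderiv u x + 2 * htil ε = 2 * heps h ε x * Real.exp (u x / 2))

/-- The energy functional I. -/
def Ifun (K h u : ℂ → ℝ) : ℝ :=
  (∫ x in unitDisk, ((1/2) * gradSq u x - 2 * K x * Real.exp (u x))) +
  bint (fun x => 2 * u x - 4 * h x * Real.exp (u x / 2))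

/-- The perturbation term T. -/
def Tfun (u : ℂ → ℝ) : ℝ :=
  ∫ x in unitDisk, ((1/2) * gradSq u x + Real.exp (u x) - u x)

/-- The perturbed functional I_ε. -/
def Ieps (K h : ℂ → ℝ) (ε : ℝ) (u : ℂ → ℝ) : ℝ := (Ifun K h u + ε * Tfun u) / (1 + ε)

def pol (p : ℝ × ℝ) : ℂ := (p.1 : ℂ) * ((Real.cos p.2 : ℂ) + (Real.sin p.2 : ℂ) * Complex.I)

lemma pol_contDiff : ContDiff ℝ 1 pol := by
  unfold pol
  have h1 : ContDiff ℝ 1 (fun x : ℝ => (x : ℂ)) := Complex.ofRealCLM.contDiff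
  have h2 : ContDiff ℝ 1 (fun p : ℝ × ℝ => ((p.1 : ℝ) : ℂ)) := h1.comp contDiff_fst
  have h3 : ContDiff ℝ 1 (fun p : ℝ × ℝ => ((Real.cos p.2 : ℝ) : ℂ)) :=
    h1.comp (Real.contDiff_cos.comp contDiff_snd)
  have h4 : ContDiff ℝ 1 (fun p : ℝ × ℝ => ((Real.sin p.2 : ℝ) : ℂ)) :=
    h1.comp (Real.contDiff_sin.comp contDiff_snd)
  exact h2.mul (h3.add (h4.mul contDiff_const))

lemma pol_one (θ : ℝ) : pol (1, θ) = bpt θ := by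
  simp [pol, bpt, Complex.exp_mul_I]

lemma fderiv_split (a : ℂ → ℝ) (x : ℂ) (s t : ℝ) :
    fderiv ℝ a x ((s : ℂ) + (t : ℂ) * Complex.I) = s * pd a 1 x + t * pd a Complex.I x := by
  have : ((s : ℂ) + (t : ℂ) * Complex.I) = s • (1 : ℂ) + t • Complex.I := by simp
  rw [this, map_add, map_smul, map_smul]
  simp [pd]

lemma pol_hasDerivAt_r (r θ : ℝ) :
    HasDerivAt (fun r => pol (r, θ)) ((Real.cos θ : ℂ) + (Real.sin θ : ℂ) * Complex.I) r := by
  have := (Complex.ofRealCLM.hasDerivAt (x := r)).mul_const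
    ((Real.cos θ : ℂ) + (Real.sin θ : ℂ) * Complex.I)
  simpa [pol] using this

lemma pol_hasDerivAt_t (r θ : ℝ) :
    HasDerivAt (fun t => pol (r, t))
      (((-(r * Real.sin θ) : ℝ) : ℂ) + ((r * Real.cos θ : ℝ) : ℂ) * Complex.I) θ := by
  have h1 := (Real.hasDerivAt_cos θ).ofReal_comp
  have h2 := ((Real.hasDerivAt_sin θ).ofReal_comp).mul_const Complex.I
  have := (h1.add h2).const_mul (r : ℂ)
  refine this.congr_deriv ?_
  push_cast
  ring

lemma comp_r {a : ℂ → ℝ} (ha : ContDiff ℝ 1 a) (r θ : ℝ) :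
    HasDerivAt (fun r => a (pol (r, θ)))
      (Real.cos θ * pd a 1 (pol (r, θ)) + Real.sin θ * pd a Complex.I (pol (r, θ))) r := by
  have := ((ha.differentiable one_ne_zero).differentiableAt (x := pol (r, θ))).hasFDerivAt.comp_hasDerivAt r
    (pol_hasDerivAt_r r θ)
  rwa [fderiv_split] at this

lemma comp_t {a : ℂ → ℝ} (ha : ContDiff ℝ 1 a) (r θ : ℝ) :
    HasDerivAt (fun t => a (pol (r, t)))
      (-(r * Real.sin θ) * pd a 1 (pol (r, θ)) + r * Real.cos θ * pd a Complex.I (pol (r, θ))) θ := by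
  have := ((ha.differentiable one_ne_zero).differentiableAt (x := pol (r, θ))).hasFDerivAt.comp_hasDerivAt θ
    (pol_hasDerivAt_t r θ)
  rwa [fderiv_split] at this

lemma fderiv_fst_eq {f : ℝ × ℝ → ℝ} (hf : ContDiff ℝ 1 f) (r θ d : ℝ)
    (h : HasDerivAt (fun r => f (r, θ)) d r) : fderiv ℝ f (r, θ) (1, 0) = d := by
  have h1 : HasDerivAt (fun r : ℝ => (r, θ)) ((1 : ℝ), (0 : ℝ)) r :=
    (hasDerivAt_id r).prodMk (hasDerivAt_const r θ)
  have := ((hf.differentiable one_ne_zero).differentiableAt (x := (r, θ))).hasFDerivAt.comp_hasDerivAt r h1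
  exact this.unique h

lemma fderiv_snd_eq {f : ℝ × ℝ → ℝ} (hf : ContDiff ℝ 1 f) (r θ d : ℝ)
    (h : HasDerivAt (fun t => f (r, t)) d θ) : fderiv ℝ f (r, θ) (0, 1) = d := by
  have h1 : HasDerivAt (fun t : ℝ => (r, t)) ((0 : ℝ), (1 : ℝ)) θ :=
    (hasDerivAt_const θ r).prodMk (hasDerivAt_id θ)
  have := ((hf.differentiable one_ne_zero).differentiableAt (x := (r, θ))).hasFDerivAt.comp_hasDerivAt θ h1
  exact this.unique h

theorem disk_divergence (a b : ℂ → ℝ) (ha : ContDiff ℝ 1 a) (hb : ContDiff ℝ 1 b) :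
    ∫ x in unitDisk, (pd a 1 x + pd b Complex.I x)
      = ∫ θ in (0:ℝ)..(2 * π), (Real.cos θ * a (bpt θ) + Real.sin θ * b (bpt θ)) := by
  have hap : ContDiff ℝ 1 (fun p => a (pol p)) := ha.comp pol_contDiff
  have hbp : ContDiff ℝ 1 (fun p => b (pol p)) := hb.comp pol_contDiff
  have hc : ContDiff ℝ 1 (fun p : ℝ × ℝ => Real.cos p.2) := Real.contDiff_cos.comp contDiff_snd
  have hs : ContDiff ℝ 1 (fun p : ℝ × ℝ => Real.sin p.2) := Real.contDiff_sin.comp contDiff_snd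
  set P : ℝ × ℝ → ℝ := fun p => p.1 * (Real.cos p.2 * a (pol p) + Real.sin p.2 * b (pol p)) with hP
  set Q : ℝ × ℝ → ℝ := fun p => -Real.sin p.2 * a (pol p) + Real.cos p.2 * b (pol p) with hQ
  have hPc : ContDiff ℝ 1 P := contDiff_fst.mul ((hc.mul hap).add (hs.mul hbp))
  have hQc : ContDiff ℝ 1 Q := (hs.neg.mul hap).add (hc.mul hbp)
  have key : ∀ p : ℝ × ℝ, fderiv ℝ P p (1, 0) + fderiv ℝ Q p (0, 1)
      = p.1 * (pd a 1 (pol p) + pd b Complex.I (pol p)) := by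
    rintro ⟨r, θ⟩
    rw [fderiv_fst_eq hPc r θ _ ((hasDerivAt_id r).mul
      (((comp_r ha r θ).const_mul (Real.cos θ)).add ((comp_r hb r θ).const_mul (Real.sin θ)))),
      fderiv_snd_eq hQc r θ _ (((Real.hasDerivAt_sin θ).neg.mul (comp_t ha r θ)).add
        ((Real.hasDerivAt_cos θ).mul (comp_t hb r θ)))]
    simp only [id, Pi.neg_apply]
    linear_combination (r * (pd a 1 (pol (r, θ)) + pd b Complex.I (pol (r, θ)))) * (Real.sin_sq_add_cos_sq θ)
  have hdiv := integral_divergence_prod_Icc_of_hasFDerivAt_of_le P Q (fderiv ℝ P) (fderiv ℝ Q)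
    ((0 : ℝ), -π) ((1 : ℝ), π) ⟨by norm_num, by simpa using by linarith [Real.pi_pos]⟩
    hPc.continuous.continuousOn hQc.continuous.continuousOn
    (fun x _ => ((hPc.differentiable one_ne_zero).differentiableAt).hasFDerivAt)
    (fun x _ => ((hQc.differentiable one_ne_zero).differentiableAt).hasFDerivAt)
    (by
      apply Continuous.integrableOn_Icc
      have h1 := hPc.continuous_fderiv one_ne_zero
      have h2 := hQc.continuous_fderiv one_ne_zero
      exact (h1.clm_apply continuous_const).add (h2.clm_apply continuous_const))
  have hper : ∀ r, Q (r, π) = Q (r, -π) := by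
    intro r
    have : pol (r, π) = pol (r, -π) := by simp [pol]
    simp [hQ, this]
  have hP0 : ∀ y, P (0, y) = 0 := by intro y; simp [hP]
  have hP1 : ∀ y, P (1, y) = Real.cos y * a (bpt y) + Real.sin y * b (bpt y) := by
    intro y; simp [hP, pol_one]
  simp only [hper, hP0, hP1, sub_self, zero_add, intervalIntegral.integral_zero, sub_zero, key] at hdiv
  have hshift : (∫ y in (-π)..π, (Real.cos y * a (bpt y) + Real.sin y * b (bpt y)))
      = ∫ θ in (0:ℝ)..(2 * π), (Real.cos θ * a (bpt θ) + Real.sin θ * b (bpt θ)) := by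
    have hp : Function.Periodic (fun y => Real.cos y * a (bpt y) + Real.sin y * b (bpt y)) (2 * π) := by
      intro y
      have : bpt (y + 2 * π) = bpt y := by
        rw [← pol_one, ← pol_one]; simp [pol]
      simp [this]
    have := hp.intervalIntegral_add_eq (-π) 0
    rw [show -π + 2 * π = π by ring, zero_add] at this
    exact this
  rw [← hshift, ← hdiv]
  rw [← integral_indicator (by exact measurableSet_ball), ← Complex.integral_comp_polarCoord_symm]
  have hpol : ∀ p, Complex.polarCoord.symm p = pol p := by
    intro p; rw [Complex.polarCoord_symm_apply, pol]
  have hnorm : ∀ p : ℝ × ℝ, ‖pol p‖ = |p.1| := by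
    intro p; rw [← hpol, Complex.norm_polarCoord_symm]
  have hT : polarCoord.target = Set.Ioi (0 : ℝ) ×ˢ Set.Ioo (-π) π := rfl
  have hTm : MeasurableSet (Set.Ioi (0 : ℝ) ×ˢ Set.Ioo (-π) π) := measurableSet_Ioi.prod measurableSet_Ioo
  have hSm : MeasurableSet (Set.Ioo (0 : ℝ) 1 ×ˢ Set.Ioo (-π) π) := measurableSet_Ioo.prod measurableSet_Ioo
  have hae : (Set.Icc ((0 : ℝ), -π) ((1 : ℝ), π) : Set (ℝ × ℝ)) =ᵐ[volume]
      (Set.Ioo (0 : ℝ) 1 ×ˢ Set.Ioo (-π) π : Set (ℝ × ℝ)) := by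
    rw [← Set.Icc_prod_Icc]
    exact (Measure.set_prod_ae_eq Ioo_ae_eq_Icc Ioo_ae_eq_Icc).symm
  rw [setIntegral_congr_set hae, hT, ← integral_indicator hTm, ← integral_indicator hSm]
  congr 1
  ext ⟨r, θ⟩
  by_cases h1 : 0 < r <;> by_cases h2 : r < 1 <;> by_cases h3 : -π < θ <;> by_cases h4 : θ < π <;>
    simp [Set.indicator, h1, h2, h3, h4, unitDisk, hnorm, hpol, abs_of_pos,
      -Complex.polarCoord_symm_apply]

lemma line_deriv {f : ℂ → ℝ} (hf : ContDiff ℝ 1 f) (x v : ℂ) :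
    HasDerivAt (fun t : ℝ => f (x + t * v)) (pd f v x) 0 := by
  have h1 : HasDerivAt (fun t : ℝ => x + (t : ℂ) * v) v 0 := by
    have := ((Complex.ofRealCLM.hasDerivAt (x := (0 : ℝ))).mul_const v).const_add x
    simpa using this
  have h2 : HasFDerivAt f (fderiv ℝ f x) (x + ((0 : ℝ) : ℂ) * v) := by
    simpa using ((hf.differentiable one_ne_zero).differentiableAt (x := x)).hasFDerivAt
  exact h2.comp_hasDerivAt 0 h1

lemma re_contDiff : ContDiff ℝ 1 (fun x : ℂ => x.re) := Complex.reCLM.contDiff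
lemma im_contDiff : ContDiff ℝ 1 (fun x : ℂ => x.im) := Complex.imCLM.contDiff

lemma pd_re (v x : ℂ) : pd (fun x => x.re) v x = v.re := by
  unfold pd
  have : (fun x : ℂ => x.re) = Complex.reCLM := rfl
  rw [this, ContinuousLinearMap.fderiv]; rfl

lemma pd_im (v x : ℂ) : pd (fun x => x.im) v x = v.im := by
  unfold pd
  have : (fun x : ℂ => x.im) = Complex.imCLM := rfl
  rw [this, ContinuousLinearMap.fderiv]; rfl

lemma pd_add {f g : ℂ → ℝ} (hf : ContDiff ℝ 1 f) (hg : ContDiff ℝ 1 g) (v x : ℂ) :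
    pd (fun y => f y + g y) v x = pd f v x + pd g v x := by
  have := (line_deriv hf x v).add (line_deriv hg x v)
  exact (line_deriv (hf.add hg) x v).unique this

lemma pd_sub {f g : ℂ → ℝ} (hf : ContDiff ℝ 1 f) (hg : ContDiff ℝ 1 g) (v x : ℂ) :
    pd (fun y => f y - g y) v x = pd f v x - pd g v x := by
  have := (line_deriv hf x v).sub (line_deriv hg x v)
  exact (line_deriv (hf.sub hg) x v).unique this

lemma pd_mul {f g : ℂ → ℝ} (hf : ContDiff ℝ 1 f) (hg : ContDiff ℝ 1 g) (v x : ℂ) :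
    pd (fun y => f y * g y) v x = pd f v x * g x + f x * pd g v x := by
  have := (line_deriv hf x v).mul (line_deriv hg x v)
  simpa using (line_deriv (hf.mul hg) x v).unique this

lemma pd_const (c : ℝ) (v x : ℂ) : pd (fun _ => c) v x = 0 := by
  simp [pd]

lemma pd_exp {f : ℂ → ℝ} (hf : ContDiff ℝ 1 f) (v x : ℂ) :
    pd (fun y => Real.exp (f y)) v x = Real.exp (f x) * pd f v x := by
  have := (line_deriv hf x v).exp
  simpa using (line_deriv hf.exp x v).unique this

lemma pd_contDiff {u : ℂ → ℝ} (hu : ContDiff ℝ 2 u) (v : ℂ) : ContDiff ℝ 1 (fun x => pd u v x) := by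
  unfold pd
  exact (hu.fderiv_right (m := 1) (by norm_num)).clm_apply contDiff_const

lemma pd_symm {u : ℂ → ℝ} (hu : ContDiff ℝ 2 u) (v w x : ℂ) :
    pd (fun y => pd u v y) w x = pd (fun y => pd u w y) v x := by
  have hs : IsSymmSndFDerivAt ℝ u x := hu.contDiffAt.isSymmSndFDerivAt (by simp)
  have hd : DifferentiableAt ℝ (fderiv ℝ u) x :=
    ((hu.fderiv_right (m := 1) (by norm_num)).differentiable one_ne_zero).differentiableAt
  have : ∀ v w, pd (fun y => pd u v y) w x = fderiv ℝ (fderiv ℝ u) x w v := by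
    intro v w
    unfold pd
    rw [fderiv_clm_apply hd (differentiableAt_const v)]
    simp
  rw [this, this]
  exact hs.eq w v

def F1 (x : ℂ) : ℝ := 1 - x.re * x.re + x.im * x.im
def F2 (x : ℂ) : ℝ := (-2) * (x.re * x.im)

lemma F1_c : ContDiff ℝ 1 F1 :=
  (contDiff_const.sub (re_contDiff.mul re_contDiff)).add (im_contDiff.mul im_contDiff)
lemma F2_c : ContDiff ℝ 1 F2 := contDiff_const.mul (re_contDiff.mul im_contDiff)

lemma pd_F1 (v x : ℂ) : pd F1 v x = -2 * x.re * v.re + 2 * x.im * v.im := by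
  unfold F1
  rw [pd_add (contDiff_const.sub (re_contDiff.mul re_contDiff)) (im_contDiff.mul im_contDiff),
    pd_sub contDiff_const (re_contDiff.mul re_contDiff), pd_mul re_contDiff re_contDiff,
    pd_mul im_contDiff im_contDiff, pd_const, pd_re, pd_im]
  ring

lemma pd_F2 (v x : ℂ) : pd F2 v x = -2 * (v.re * x.im + x.re * v.im) := by
  unfold F2
  rw [pd_mul contDiff_const (re_contDiff.mul im_contDiff), pd_mul re_contDiff im_contDiff,
    pd_const, pd_re, pd_im]
  ring

/-- The scalar coefficient. -/
def Mf (k u : ℂ → ℝ) (κ : ℝ) (x : ℂ) : ℝ := 2 * (k x * Real.exp (u x)) - (2 * κ) * (u x + 1)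

lemma Mf_c {k u : ℂ → ℝ} (κ : ℝ) (hk : ContDiff ℝ 1 k) (hu : ContDiff ℝ 1 u) :
    ContDiff ℝ 1 (Mf k u κ) :=
  (contDiff_const.mul (hk.mul hu.exp)).sub (contDiff_const.mul (hu.add contDiff_const))

lemma pd_Mf {k u : ℂ → ℝ} (κ : ℝ) (hk : ContDiff ℝ 1 k) (hu : ContDiff ℝ 1 u) (v x : ℂ) :
    pd (Mf k u κ) v x = 2 * Real.exp (u x) * (pd k v x + k x * pd u v x) - 2 * κ * pd u v x := by
  unfold Mf
  rw [pd_sub (contDiff_const.mul (hk.mul hu.exp)) (contDiff_const.mul (hu.add contDiff_const)),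
    pd_mul contDiff_const (hk.mul hu.exp), pd_mul hk hu.exp, pd_exp hu,
    pd_mul contDiff_const (hu.add contDiff_const), pd_add hu contDiff_const]
  simp only [pd_const]
  ring

/-- General shape of the components of the vector field. -/
def W1 (M p q u : ℂ → ℝ) (x : ℂ) : ℝ :=
  F1 x * (M x + (1/2) * (p x * p x - q x * q x)) + F2 x * (p x * q x) - 4 * (x.re * p x - u x)
def W2 (M p q : ℂ → ℝ) (x : ℂ) : ℝ :=
  F2 x * (M x + (1/2) * (q x * q x - p x * p x)) + F1 x * (p x * q x) - 4 * (x.re * q x)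

section
variable {M p q u : ℂ → ℝ} (hM : ContDiff ℝ 1 M) (hp : ContDiff ℝ 1 p) (hq : ContDiff ℝ 1 q)
  (hu : ContDiff ℝ 1 u)

lemma Sp_c {M p q : ℂ → ℝ} (hM : ContDiff ℝ 1 M) (hp : ContDiff ℝ 1 p) (hq : ContDiff ℝ 1 q) :
    ContDiff ℝ 1 (fun x => M x + (1/2) * (p x * p x - q x * q x)) :=
  hM.add (contDiff_const.mul ((hp.mul hp).sub (hq.mul hq)))

lemma pd_Sp {M p q : ℂ → ℝ} (hM : ContDiff ℝ 1 M) (hp : ContDiff ℝ 1 p) (hq : ContDiff ℝ 1 q)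
    (v x : ℂ) : pd (fun x => M x + (1/2) * (p x * p x - q x * q x)) v x
      = pd M v x + p x * pd p v x - q x * pd q v x := by
  rw [pd_add hM (contDiff_const.mul ((hp.mul hp).sub (hq.mul hq))),
    pd_mul contDiff_const ((hp.mul hp).sub (hq.mul hq)), pd_sub (hp.mul hp) (hq.mul hq),
    pd_mul hp hp, pd_mul hq hq, pd_const]
  ring

lemma W1_c {M p q u : ℂ → ℝ} (hM : ContDiff ℝ 1 M) (hp : ContDiff ℝ 1 p) (hq : ContDiff ℝ 1 q)
    (hu : ContDiff ℝ 1 u) : ContDiff ℝ 1 (W1 M p q u) :=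
  ((F1_c.mul (Sp_c hM hp hq)).add (F2_c.mul (hp.mul hq))).sub
    (contDiff_const.mul ((re_contDiff.mul hp).sub hu))

lemma W2_c {M p q : ℂ → ℝ} (hM : ContDiff ℝ 1 M) (hp : ContDiff ℝ 1 p) (hq : ContDiff ℝ 1 q) :
    ContDiff ℝ 1 (W2 M p q) :=
  ((F2_c.mul (Sp_c hM hq hp)).add (F1_c.mul (hp.mul hq))).sub
    (contDiff_const.mul (re_contDiff.mul hq))

lemma pd_W1 {M p q u : ℂ → ℝ} (hM : ContDiff ℝ 1 M) (hp : ContDiff ℝ 1 p) (hq : ContDiff ℝ 1 q)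
    (hu : ContDiff ℝ 1 u) (v x : ℂ) : pd (W1 M p q u) v x =
    pd F1 v x * (M x + (1/2) * (p x * p x - q x * q x))
      + F1 x * (pd M v x + p x * pd p v x - q x * pd q v x)
      + pd F2 v x * (p x * q x) + F2 x * (pd p v x * q x + p x * pd q v x)
      - 4 * (v.re * p x + x.re * pd p v x - pd u v x) := by
  unfold W1
  rw [pd_sub ((F1_c.mul (Sp_c hM hp hq)).add (F2_c.mul (hp.mul hq)))
      (contDiff_const.mul ((re_contDiff.mul hp).sub hu)),
    pd_add (F1_c.mul (Sp_c hM hp hq)) (F2_c.mul (hp.mul hq)),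
    pd_mul F1_c (Sp_c hM hp hq), pd_mul F2_c (hp.mul hq), pd_mul hp hq, pd_Sp hM hp hq,
    pd_mul contDiff_const ((re_contDiff.mul hp).sub hu), pd_sub (re_contDiff.mul hp) hu,
    pd_mul re_contDiff hp, pd_const, pd_re]
  ring

lemma pd_W2 {M p q : ℂ → ℝ} (hM : ContDiff ℝ 1 M) (hp : ContDiff ℝ 1 p) (hq : ContDiff ℝ 1 q)
    (v x : ℂ) : pd (W2 M p q) v x =
    pd F2 v x * (M x + (1/2) * (q x * q x - p x * p x))
      + F2 x * (pd M v x + q x * pd q v x - p x * pd p v x)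
      + pd F1 v x * (p x * q x) + F1 x * (pd p v x * q x + p x * pd q v x)
      - 4 * (v.re * q x + x.re * pd q v x) := by
  unfold W2
  rw [pd_sub ((F2_c.mul (Sp_c hM hq hp)).add (F1_c.mul (hp.mul hq)))
      (contDiff_const.mul (re_contDiff.mul hq)),
    pd_add (F2_c.mul (Sp_c hM hq hp)) (F1_c.mul (hp.mul hq)),
    pd_mul F2_c (Sp_c hM hq hp), pd_mul F1_c (hp.mul hq), pd_mul hp hq, pd_Sp hM hq hp,
    pd_mul contDiff_const (re_contDiff.mul hq),
    pd_mul re_contDiff hq, pd_const, pd_re]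
  ring
end

lemma bpt_re (θ : ℝ) : (bpt θ).re = Real.cos θ := by
  rw [← pol_one]; simp [pol, Complex.cos_ofReal_re]
lemma bpt_im (θ : ℝ) : (bpt θ).im = Real.sin θ := by
  rw [← pol_one]; simp [pol, Complex.sin_ofReal_re]

/-- Proposition 2.4 (Kazdan–Warner type identity) for solutions of (P_ε),
with F(x₁,x₂) = (1 − x₁² + x₂², −2x₁x₂). -/
theorem kazdan_warner_identity
    (K h : ℂ → ℝ)
    (hK : ContDiff ℝ 2 K)
    (hKneg : ∀ x ∈ closedUnitDisk, K x < 0)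
    (hh : ContDiff ℝ 2 (fun θ => h (bpt θ)))
    (ε : ℝ) (hε : -1 < ε)
    (u : ℂ → ℝ) (hu : IsPerturbedSolution K h ε u) :
    (∫ θ in (0:ℝ)..(2 * π),
        (4 * Real.sin θ * deriv (fun t => heps h ε (bpt t)) θ * Real.exp (u (bpt θ) / 2)
         - 2 * Real.cos θ * (htil ε - 1) * u (bpt θ)))
    = ∫ x in unitDisk,
        (4 * x.re * Ktil ε * u x
         + Real.exp (u x) * (pd (Keps K ε) 1 x * (1 - x.re ^ 2 + x.im ^ 2)
            + pd (Keps K ε) Complex.I x * (-2 * x.re * x.im))) := by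
  obtain ⟨hu2, hin, hbd⟩ := hu
  have hu1 : ContDiff ℝ 1 u := hu2.of_le (by norm_num)
  have hk : ContDiff ℝ 1 (Keps K ε) := by
    unfold Keps
    exact ((hK.of_le (by norm_num)).sub contDiff_const).div_const _
  set k := Keps K ε with hkdef
  set κ := Ktil ε with hκ
  set η := htil ε with hη
  have hp := pd_contDiff hu2 1
  have hq := pd_contDiff hu2 Complex.I
  have hM := Mf_c κ hk hu1
  have hdiv := disk_divergence (W1 (Mf k u κ) (fun x => pd u 1 x) (fun x => pd u Complex.I x) u)
    (W2 (Mf k u κ) (fun x => pd u 1 x) (fun x => pd u Complex.I x))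
    (W1_c hM hp hq hu1) (W2_c hM hp hq)
  have hL : ∫ x in unitDisk, (pd (W1 (Mf k u κ) (fun x => pd u 1 x) (fun x => pd u Complex.I x) u) 1 x
      + pd (W2 (Mf k u κ) (fun x => pd u 1 x) (fun x => pd u Complex.I x)) Complex.I x)
      = 2 * ∫ x in unitDisk,
        (4 * x.re * κ * u x
         + Real.exp (u x) * (pd k 1 x * (1 - x.re ^ 2 + x.im ^ 2)
            + pd k Complex.I x * (-2 * x.re * x.im))) := by
    rw [← integral_const_mul]
    refine setIntegral_congr_fun (by exact measurableSet_ball) ?_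
    intro x hx
    have hlap := hin x hx
    have hsym := pd_symm hu2 1 Complex.I x
    have e : lap u x = pd (fun y => pd u 1 y) 1 x + pd (fun y => pd u Complex.I y) Complex.I x := rfl
    rw [e] at hlap
    simp only
    rw [pd_W1 hM hp hq hu1, pd_W2 hM hp hq, pd_Mf κ hk hu1, pd_Mf κ hk hu1]
    simp only [pd_F1, pd_F2, Complex.one_re, Complex.one_im, Complex.I_re, Complex.I_im, F1, F2, Mf]
    rw [hsym]
    linear_combination (-((1 - x.re * x.re + x.im * x.im) * pd u 1 x
      + (-2) * (x.re * x.im) * pd u Complex.I x) + 4 * x.re) * hlap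
  rw [hL] at hdiv
  -- boundary
  have hHc : ContDiff ℝ 1 (fun θ => heps h ε (bpt θ)) := by
    unfold heps
    exact (hh.of_le (by norm_num)).div_const _
  set H : ℝ → ℝ := fun θ => heps h ε (bpt θ) with hH
  have hud : ∀ θ, HasDerivAt (fun t => u (bpt t))
      (-Real.sin θ * pd u 1 (bpt θ) + Real.cos θ * pd u Complex.I (bpt θ)) θ := by
    intro θ
    have := comp_t hu1 1 θ
    simpa only [pol_one, one_mul] using this
  have hbc : Continuous bpt := by unfold bpt; fun_prop
  have huc : Continuous (fun t => u (bpt t)) := hu1.continuous.comp hbc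
  have hpc : Continuous (fun t => pd u 1 (bpt t)) := hp.continuous.comp hbc
  have hqc : Continuous (fun t => pd u Complex.I (bpt t)) := hq.continuous.comp hbc
  have hHd : ∀ θ, HasDerivAt H (deriv H θ) θ := fun θ =>
    ((hHc.differentiable one_ne_zero).differentiableAt).hasDerivAt
  have hHdc : Continuous (deriv H) := hHc.continuous_deriv le_rfl
  have hHcc : Continuous H := hHc.continuous
  set B' : ℝ → ℝ := fun θ =>
    -8 * Real.cos θ * H θ * Real.exp (u (bpt θ) / 2) - 8 * Real.sin θ * deriv H θ * Real.exp (u (bpt θ) / 2)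
    - 4 * Real.sin θ * H θ * Real.exp (u (bpt θ) / 2)
      * (-Real.sin θ * pd u 1 (bpt θ) + Real.cos θ * pd u Complex.I (bpt θ))
    + 4 * η * Real.cos θ * (u (bpt θ) + 2)
    + 4 * η * Real.sin θ * (-Real.sin θ * pd u 1 (bpt θ) + Real.cos θ * pd u Complex.I (bpt θ)) with hB'
  have hBd : ∀ θ, HasDerivAt (fun θ => Real.sin θ * (-8 * (H θ * Real.exp (u (bpt θ) / 2))
      + 4 * η * (u (bpt θ) + 2))) (B' θ) θ := by
    intro θ
    have h1 := ((hHd θ).mul (((hud θ).div_const 2).exp)).const_mul (-8)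
    have h2 := ((hud θ).add_const 2).const_mul (4 * η)
    refine ((Real.hasDerivAt_sin θ).mul (h1.add h2)).congr_deriv ?_
    simp only [hB', Pi.add_apply, Pi.mul_apply]
    ring
  have hBc : Continuous B' := by rw [hB']; fun_prop
  have hBint : ∫ θ in (0:ℝ)..(2 * π), B' θ = 0 := by
    rw [intervalIntegral.integral_eq_sub_of_hasDerivAt (fun θ _ => hBd θ) (hBc.intervalIntegrable _ _)]
    simp
  have hR : ∫ θ in (0:ℝ)..(2 * π), (Real.cos θ * W1 (Mf k u κ) (fun x => pd u 1 x) (fun x => pd u Complex.I x) u (bpt θ)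
      + Real.sin θ * W2 (Mf k u κ) (fun x => pd u 1 x) (fun x => pd u Complex.I x) (bpt θ))
      = ∫ θ in (0:ℝ)..(2 * π), (2 * (4 * Real.sin θ * deriv H θ * Real.exp (u (bpt θ) / 2)
         - 2 * Real.cos θ * (η - 1) * u (bpt θ)) + B' θ) := by
    refine intervalIntegral.integral_congr ?_
    intro θ _
    have hb : bpt θ ∈ unitCircle := by
      simp [unitCircle, bpt, Complex.norm_exp_ofReal_mul_I]
    have hbd' := hbd (bpt θ) hb
    unfold nderiv at hbd'
    rw [bpt_re, bpt_im] at hbd'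
    have hHv : heps h ε (bpt θ) = H θ := rfl
    rw [hHv] at hbd'
    have hsc := Real.sin_sq_add_cos_sq θ
    simp only [W1, W2, F1, F2, bpt_re, bpt_im, hB']
    generalize Real.sin θ = s at *
    generalize Real.cos θ = c at *
    generalize Mf k u κ (bpt θ) = m at *
    generalize pd u 1 (bpt θ) = p at *
    generalize pd u Complex.I (bpt θ) = q at *
    generalize Real.exp (u (bpt θ) / 2) = E at *
    generalize H θ = H0 at *
    generalize deriv H θ = H1 at *
    generalize u (bpt θ) = U at *
    linear_combination (-2 * s * (-s * p + c * q) - 4 * c) * hbd'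
      - (p * (c * p + s * q) + c * (m - (p ^ 2 + q ^ 2) / 2)) * hsc
  rw [hR, intervalIntegral.integral_add, hBint, intervalIntegral.integral_const_mul] at hdiv
  · linarith
  · apply Continuous.intervalIntegrable
    fun_prop
  · exact hBc.intervalIntegrable _ _

end
end

section
/- Assume hypothesis (H) and that there is a point x₀ ∈ ∂𝔻 with h(x₀) > √(−K(x₀)). Then there exists ε₀ > 0 such that for every ε ∈ (0,ε₀) there exist functions u₀, u₁ ∈ C¹(closed 𝔻) with ∫_{∂𝔻} e^{u₀/2} < 1 < ∫_{∂𝔻} e^{u₁/2} and max{ I_ε(u₀), I_ε(u₁) } < inf{ I_ε(u) : u ∈ C¹(closed 𝔻), ∫_{∂𝔻} e^{u/2} = 1 } (mountain-pass geometry: by continuity of u ↦ ∫_{∂𝔻} e^{u/2}, every continuous path joining u₀ to u₁ crosses the constraint set, on which I_ε strictly exceeds its values at the endpoints). -/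
open MeasureTheory Real Filter

noncomputable section

lemma taylor_exp (a : ℕ → ℂ) (N : ℕ) : ∃ b : ℕ → ℂ, b 0 = 1 ∧
    (∀ n : ℕ, ((n : ℂ) + 1) * b (n + 1) =
      ∑ i ∈ Finset.range (n + 1), (if i < N then ((i : ℂ) + 1) * a i else 0) * b (n - i)) ∧
    ∀ z : ℂ, HasSum (fun n => b n * z ^ n)
      (Complex.exp (∑ k ∈ Finset.range N, a k * z ^ (k + 1))) := by
  set p : ℂ → ℂ := fun z => ∑ k ∈ Finset.range N, a k * z ^ (k + 1) with hp
  set p' : ℂ → ℂ := fun z => ∑ k ∈ Finset.range N, (((k : ℂ) + 1) * a k) * z ^ k with hp'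
  set f : ℂ → ℂ := fun z => Complex.exp (p z) with hf
  have hpd : ∀ z, HasDerivAt p (p' z) z := by
    intro z
    refine HasDerivAt.fun_sum fun k _ => ?_
    have := (hasDerivAt_pow (k + 1) z).const_mul (a k)
    refine this.congr_deriv ?_
    push_cast
    ring
  have hfd : deriv f = fun z => p' z * f z := by
    funext z
    have := (hpd z).cexp.deriv
    rw [hf, this, mul_comm]
  have hfdiff : Differentiable ℂ f := fun z => (hpd z).cexp.differentiableAt
  have hp'diff : Differentiable ℂ p' := by
    rw [hp']; fun_prop
  have hit : ∀ i, iteratedDeriv i p' 0 = (i.factorial : ℂ) * (if i < N then ((i : ℂ) + 1) * a i else 0) := by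
    intro i
    have : p' = ∑ k ∈ Finset.range N, fun z => (((k : ℂ) + 1) * a k) * z ^ k := by
      funext z; simp [hp']
    rw [this, iteratedDeriv_sum]
    · simp only [iteratedDeriv_const_mul_field, iteratedDeriv_fun_pow_zero]
      simp [mul_comm]
    · intro k _
      fun_prop
  refine ⟨fun n => (n.factorial : ℂ)⁻¹ * iteratedDeriv n f 0, ?_, ?_, ?_⟩
  · simp [hf, hp]
  · intro n
    beta_reduce
    rw [iteratedDeriv_succ', hfd, iteratedDeriv_fun_mul (hp'diff.contDiff.contDiffAt) (hfdiff.contDiff.contDiffAt), ← mul_assoc, Finset.mul_sum]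
    refine Finset.sum_congr rfl fun i hi => ?_
    rw [hit]
    have hin : i ≤ n := by simpa [Nat.lt_succ_iff] using hi
    have h1 : (n.choose i : ℂ) * i.factorial * (n - i).factorial = n.factorial := by
      exact_mod_cast Nat.choose_mul_factorial_mul_factorial hin
    have e1 : (n.factorial : ℂ) ≠ 0 := by exact_mod_cast n.factorial_ne_zero
    have e2 : ((n-i).factorial : ℂ) ≠ 0 := by exact_mod_cast (n-i).factorial_ne_zero
    have e3 : ((n : ℂ) + 1) ≠ 0 := by exact_mod_cast n.succ_ne_zero
    rw [Nat.factorial_succ]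
    push_cast
    generalize (if i < N then ((i : ℂ) + 1) * a i else 0) = d
    field_simp
    rw [← h1]; ring
  · intro z
    have := Complex.hasSum_taylorSeries_of_entire hfdiff 0 z
    simpa [mul_assoc, mul_comm, mul_left_comm] using this

lemma lm_coeff (a : ℕ → ℂ) (N : ℕ) (b β : ℕ → ℂ) (hb0 : b 0 = 1) (hβ0 : β 0 = 1)
    (hb : ∀ n : ℕ, ((n : ℂ) + 1) * b (n + 1) =
      ∑ i ∈ Finset.range (n + 1), (if i < N then ((i : ℂ) + 1) * a i else 0) * b (n - i))
    (hβ : ∀ n : ℕ, ((n : ℂ) + 1) * β (n + 1) =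
      ∑ i ∈ Finset.range (n + 1), (if i < N then ((i : ℂ) + 1) *
        ((((i : ℝ) + 1) * ‖a i‖ ^ 2 : ℝ) : ℂ) else 0) * β (n - i)) (n : ℕ) :
    ∃ r : ℝ, β n = r ∧ ‖b n‖ ^ 2 ≤ r := by
  induction n using Nat.strong_induction_on with
  | _ n ih =>
  rcases n with _ | n
  · exact ⟨1, by simp [hβ0], by simp [hb0]⟩
  · have : ∀ i, ∃ r : ℝ, i ≤ n → β (n - i) = r ∧ ‖b (n - i)‖ ^ 2 ≤ r := by
      intro i
      by_cases hi : i ≤ n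
      · obtain ⟨r, hr⟩ := ih (n - i) (by omega)
        exact ⟨r, fun _ => hr⟩
      · exact ⟨0, fun h => absurd h hi⟩
    choose r hr using this
    set s : ℕ → ℝ := fun i => if i < N then ((i : ℝ) + 1) * ‖a i‖ else 0 with hs
    have hn : (0 : ℝ) < (n : ℝ) + 1 := by positivity
    have key : ((n : ℂ) + 1) * β (n + 1) = ((∑ i ∈ Finset.range (n + 1), (s i) ^ 2 * r i : ℝ) : ℂ) := by
      rw [hβ]
      push_cast
      refine Finset.sum_congr rfl fun i hi => ?_
      rw [(hr i (by simpa [Nat.lt_succ_iff] using hi)).1]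
      simp only [hs]
      split_ifs
      · push_cast; ring
      · simp
    refine ⟨(∑ i ∈ Finset.range (n + 1), (s i) ^ 2 * r i) / ((n : ℝ) + 1), ?_, ?_⟩
    · push_cast at key ⊢
      rw [← key]
      have e3 : ((n : ℂ) + 1) ≠ 0 := by exact_mod_cast n.succ_ne_zero
      field_simp
    · have h1 : ((n : ℝ) + 1) * ‖b (n + 1)‖ ≤ ∑ i ∈ Finset.range (n + 1), s i * ‖b (n - i)‖ := by
        have : ((n : ℝ) + 1) * ‖b (n + 1)‖ = ‖((n : ℂ) + 1) * b (n + 1)‖ := by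
          rw [norm_mul]
          congr 1
          rw [show ((n : ℂ) + 1) = ((n + 1 : ℕ) : ℂ) by push_cast; rfl, Complex.norm_natCast]
          push_cast; rfl
        rw [this, hb]
        refine (norm_sum_le _ _).trans (Finset.sum_le_sum fun i _ => ?_)
        rw [norm_mul]
        gcongr
        simp only [hs]
        split_ifs
        · rw [norm_mul, show ((i : ℂ) + 1) = ((i + 1 : ℕ) : ℂ) by push_cast; rfl, Complex.norm_natCast]
          push_cast; rfl
        · simp
      have h2 := Finset.sum_mul_sq_le_sq_mul_sq (Finset.range (n + 1)) (fun i => s i * ‖b (n - i)‖) (fun _ => (1:ℝ))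
      simp only [mul_one, one_pow, Finset.sum_const, Finset.card_range, nsmul_eq_mul] at h2
      have h3 : ∑ i ∈ Finset.range (n + 1), (s i * ‖b (n - i)‖) ^ 2 ≤ ∑ i ∈ Finset.range (n + 1), (s i) ^ 2 * r i := by
        refine Finset.sum_le_sum fun i hi => ?_
        rw [mul_pow]
        gcongr
        exact (hr i (by simpa [Nat.lt_succ_iff] using hi)).2
      rw [le_div_iff₀ hn]
      have h4 : (((n : ℝ) + 1) * ‖b (n + 1)‖) ^ 2 ≤ (∑ i ∈ Finset.range (n + 1), s i * ‖b (n - i)‖) ^ 2 := by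
        gcongr
      push_cast at h2
      have h5 : ((n : ℝ) + 1) * (‖b (n + 1)‖ ^ 2 * ((n : ℝ) + 1)) ≤ ((n : ℝ) + 1) * (∑ i ∈ Finset.range (n + 1), (s i) ^ 2 * r i) := by
        nlinarith
      exact le_of_mul_le_mul_left h5 hn

lemma lm_sum (a : ℕ → ℂ) (N : ℕ) : ∃ b : ℕ → ℂ,
    (∀ z : ℂ, HasSum (fun n => b n * z ^ n)
      (Complex.exp (∑ k ∈ Finset.range N, a k * z ^ (k + 1)))) ∧
    ∀ M : ℕ, ∑ n ∈ Finset.range M, ‖b n‖ ^ 2 ≤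
      Real.exp (∑ k ∈ Finset.range N, ((k : ℝ) + 1) * ‖a k‖ ^ 2) := by
  obtain ⟨b, hb0, hb, hbs⟩ := taylor_exp a N
  obtain ⟨β, hβ0, hβ, hβs⟩ := taylor_exp (fun i => ((((i : ℝ) + 1) * ‖a i‖ ^ 2 : ℝ) : ℂ)) N
  refine ⟨b, hbs, fun M => ?_⟩
  have := lm_coeff a N b β hb0 hβ0 hb hβ
  choose r hr1 hr2 using this
  have h1 := hβs 1
  simp only [one_pow, mul_one, hr1] at h1
  have h2 : HasSum r (Real.exp (∑ k ∈ Finset.range N, ((k : ℝ) + 1) * ‖a k‖ ^ 2)) := by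
    have := Complex.hasSum_re h1
    rw [← Complex.ofReal_sum, ← Complex.ofReal_exp, Complex.ofReal_re] at this
    simpa using this
  refine (Finset.sum_le_sum fun n _ => hr2 n).trans ?_
  exact sum_le_hasSum _ (fun n _ => (sq_nonneg _).trans (hr2 n)) h2

lemma bpt_cont : Continuous bpt := by unfold bpt; fun_prop

lemma bpt_norm (θ : ℝ) : ‖bpt θ‖ = 1 := by
  unfold bpt; exact Complex.norm_exp_ofReal_mul_I θ

lemma bpt_per : Function.Periodic bpt (2 * π) := by
  intro θ
  unfold bpt
  push_cast
  rw [add_mul, Complex.exp_add, Complex.exp_two_pi_mul_I, mul_one]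

lemma bpt_deriv (θ : ℝ) : HasDerivAt bpt (Complex.I * bpt θ) θ := by
  have h : HasDerivAt (fun t : ℝ => (t : ℂ) * Complex.I) (1 * Complex.I) θ :=
    (Complex.ofRealCLM.hasDerivAt (x := θ)).mul_const _
  have := h.cexp
  unfold bpt
  convert this using 1
  ring

lemma bint_eq (f : ℂ → ℝ) : bint f = ∫ θ in (-π)..π, f (bpt θ) := by
  have : Function.Periodic (fun θ => f (bpt θ)) (2 * π) := fun θ => by
    simp only [bpt_per θ]
  unfold bint
  have h := this.intervalIntegral_add_eq 0 (-π)
  rw [zero_add] at h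
  rw [h]
  congr 1; ring

lemma intOn_disk {f : ℂ → ℝ} (hf : ContinuousOn f (Metric.closedBall 0 1)) : IntegrableOn f unitDisk :=
  (hf.integrableOn_compact (isCompact_closedBall _ _)).mono_set Metric.ball_subset_closedBall

lemma polar_disk (f : ℂ → ℝ) : ∫ x in unitDisk, f x =
    ∫ p in Set.Ioo (0:ℝ) 1 ×ˢ Set.Ioo (-π) π, p.1 * f (p.1 * bpt p.2) := by
  rw [← integral_indicator (by exact measurableSet_ball), ← Complex.integral_comp_polarCoord_symm]
  rw [← integral_indicator, ← integral_indicator]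
  · congr 1
    funext p
    have hb : (p.1 * (Real.cos p.2 + Real.sin p.2 * Complex.I) : ℂ) = p.1 * bpt p.2 := by
      unfold bpt; rw [Complex.exp_mul_I]; push_cast; rfl
    by_cases hp : p ∈ polarCoord.target
    · rw [Set.indicator_of_mem hp]
      rw [Complex.polarCoord_symm_apply, hb]
      obtain ⟨h1, h2⟩ := hp
      have h1' : 0 < p.1 := h1
      have hn : ‖(p.1 : ℂ) * bpt p.2‖ = p.1 := by
        rw [norm_mul, bpt_norm, Complex.norm_real, mul_one, Real.norm_of_nonneg h1'.le]
      by_cases h : p.1 < 1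
      · rw [Set.indicator_of_mem, Set.indicator_of_mem]; · rfl
        · exact ⟨⟨h1', h⟩, h2⟩
        · simp only [unitDisk, mem_ball_zero_iff, hn, h]
      · rw [Set.indicator_of_notMem, Set.indicator_of_notMem]; · simp
        · exact fun h' => h h'.1.2
        · simp only [unitDisk, mem_ball_zero_iff, hn, h]; simp
    · rw [Set.indicator_of_notMem hp, Set.indicator_of_notMem]
      intro h
      exact hp ⟨h.1.1, h.2⟩
  · exact (measurableSet_Ioo.prod measurableSet_Ioo)
  · exact polarCoord.open_target.measurableSet

lemma fderiv_decomp (u : ℂ → ℝ) (x w : ℂ) : fderiv ℝ u x w = w.re * pd u 1 x + w.im * pd u Complex.I x := by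
  have : w = w.re • (1:ℂ) + w.im • Complex.I := by
    simp [Complex.re_add_im]
  unfold pd
  conv_lhs => rw [this]
  rw [map_add, map_smul, map_smul]; simp

/-- Green identity against a harmonic function with holomorphic derivative `φ`. -/
lemma green (u : ℂ → ℝ) (hu : ContDiff ℝ 1 u) (φ : ℂ → ℂ) (hφ : Differentiable ℂ φ) :
    ∫ x in unitDisk, fderiv ℝ u x (starRingEnd ℂ (φ x)) = bint (fun x => u x * (x * φ x).re) := by
  have hφ' : Continuous (deriv φ) := by
    have : ContDiff ℂ 2 φ := hφ.contDiff
    exact this.continuous_deriv (by norm_num)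
  have hφc : Continuous φ := hφ.continuous
  have huc : Continuous u := hu.continuous
  have hfd : Continuous (fderiv ℝ u) := hu.continuous_fderiv (by norm_num)
  have hb := bpt_cont
  -- partial derivatives
  let Fr : ℝ × ℝ → ℝ := fun p => fderiv ℝ u (p.1 * bpt p.2) (bpt p.2) * (p.1 * bpt p.2 * φ (p.1 * bpt p.2)).re
      + u (p.1 * bpt p.2) * (bpt p.2 * φ (p.1 * bpt p.2) + p.1 * bpt p.2 * (deriv φ (p.1 * bpt p.2) * bpt p.2)).re
  let Gt : ℝ × ℝ → ℝ := fun p => - (fderiv ℝ u (p.1 * bpt p.2) (p.1 * (Complex.I * bpt p.2)) * (bpt p.2 * φ (p.1 * bpt p.2)).im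
      + u (p.1 * bpt p.2) * (Complex.I * bpt p.2 * φ (p.1 * bpt p.2) + bpt p.2 * (deriv φ (p.1 * bpt p.2) * (p.1 * (Complex.I * bpt p.2)))).im)
  have hFc : Continuous Fr := by
    have : Continuous fun p : ℝ × ℝ => fderiv ℝ u (p.1 * bpt p.2) (bpt p.2) :=
      (hfd.comp (by fun_prop)).clm_apply (by fun_prop)
    fun_prop
  have hGc : Continuous Gt := by
    have : Continuous fun p : ℝ × ℝ => fderiv ℝ u (p.1 * bpt p.2) (p.1 * (Complex.I * bpt p.2)) :=
      (hfd.comp (by fun_prop)).clm_apply (by fun_prop)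
    fun_prop
  have hsum : ∀ p : ℝ × ℝ, p.1 * fderiv ℝ u (p.1 * bpt p.2) (starRingEnd ℂ (φ (p.1 * bpt p.2))) = Fr p + Gt p := by
    intro p
    have hcs : (bpt p.2).re ^ 2 + (bpt p.2).im ^ 2 = 1 := by
      have := Complex.sq_norm (bpt p.2)
      rw [bpt_norm, Complex.normSq_apply] at this
      nlinarith
    simp only [Fr, Gt, fderiv_decomp]
    generalize u (p.1 * bpt p.2) = U
    generalize pd u 1 (p.1 * bpt p.2) = U1
    generalize pd u Complex.I (p.1 * bpt p.2) = U2
    generalize deriv φ (p.1 * bpt p.2) = f2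
    generalize φ (p.1 * bpt p.2) = f1
    generalize bpt p.2 = e at hcs
    simp only [Complex.mul_re, Complex.mul_im, Complex.add_re, Complex.add_im, Complex.conj_re, Complex.conj_im,
      Complex.I_re, Complex.I_im, Complex.ofReal_re, Complex.ofReal_im]
    linear_combination (-(p.1 * (f1.re * U1 - f1.im * U2))) * hcs
  have hcomp : IsCompact (Set.Icc (0:ℝ) 1 ×ˢ Set.Icc (-π) π) := isCompact_Icc.prod isCompact_Icc
  have hint : ∀ H : ℝ × ℝ → ℝ, Continuous H → IntegrableOn H (Set.Ioo (0:ℝ) 1 ×ˢ Set.Ioo (-π) π) := fun H hH =>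
    (hH.continuousOn.integrableOn_compact hcomp).mono_set
      (Set.prod_mono Set.Ioo_subset_Icc_self Set.Ioo_subset_Icc_self)
  have hpi : -π ≤ π := by linarith [Real.pi_pos]
  rw [polar_disk]
  simp only [hsum]
  rw [integral_add (hint _ hFc) (hint _ hGc)]
  have e1 : ∫ p in Set.Ioo (0:ℝ) 1 ×ˢ Set.Ioo (-π) π, Gt p = 0 := by
    rw [Measure.volume_eq_prod, setIntegral_prod _ (by rw [← Measure.volume_eq_prod]; exact hint _ hGc)]
    have : ∀ r : ℝ, ∫ θ in Set.Ioo (-π) π, Gt (r, θ) = 0 := by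
      intro r
      rw [← integral_Ioc_eq_integral_Ioo, ← intervalIntegral.integral_of_le hpi]
      have hd : ∀ θ : ℝ, HasDerivAt (fun θ : ℝ => - (u (r * bpt θ) * (bpt θ * φ (r * bpt θ)).im)) (Gt (r, θ)) θ := by
        intro θ
        have d1 : HasDerivAt (fun θ : ℝ => (r : ℂ) * bpt θ) (r * (Complex.I * bpt θ)) θ := (bpt_deriv θ).const_mul _
        have d2 := ((hu.differentiable (by norm_num)) (r * bpt θ)).hasFDerivAt.comp_hasDerivAt θ d1
        have d3 := (hφ (r * bpt θ)).hasDerivAt.comp θ d1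
        have d4 := (Complex.imCLM.hasFDerivAt (x := bpt θ * φ (r * bpt θ))).comp_hasDerivAt θ ((bpt_deriv θ).mul d3)
        exact (d2.mul d4).neg
      rw [intervalIntegral.integral_eq_sub_of_hasDerivAt (fun θ _ => hd θ)]
      · have : bpt π = bpt (-π) := by
          have := bpt_per (-π)
          rw [← this]; congr 1; ring
        rw [this]; ring
      · exact (hGc.comp (by fun_prop : Continuous fun θ : ℝ => (r, θ))).intervalIntegrable _ _
    simp only [this]; simp
  have e2 : ∫ p in Set.Ioo (0:ℝ) 1 ×ˢ Set.Ioo (-π) π, Fr p = bint (fun x => u x * (x * φ x).re) := by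
    rw [Measure.volume_eq_prod, ← setIntegral_prod_swap, setIntegral_prod]
    · have : ∀ θ : ℝ, ∫ r in Set.Ioo (0:ℝ) 1, Fr (r, θ) = u (bpt θ) * (bpt θ * φ (bpt θ)).re := by
        intro θ
        rw [← integral_Ioc_eq_integral_Ioo, ← intervalIntegral.integral_of_le zero_le_one]
        have hd : ∀ r : ℝ, HasDerivAt (fun r : ℝ => (u (r * bpt θ) * (r * bpt θ * φ (r * bpt θ)).re)) (Fr (r, θ)) r := by
          intro r
          have d1 : HasDerivAt (fun r : ℝ => (r : ℂ) * bpt θ) (bpt θ) r := by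
            simpa using (Complex.ofRealCLM.hasDerivAt (x := r)).mul_const (bpt θ)
          have d2 := ((hu.differentiable (by norm_num)) (r * bpt θ)).hasFDerivAt.comp_hasDerivAt r d1
          have d3 := (hφ (r * bpt θ)).hasDerivAt.comp r d1
          have d4 := (Complex.reCLM.hasFDerivAt (x := r * bpt θ * φ (r * bpt θ))).comp_hasDerivAt r (d1.mul d3)
          exact (d2.mul d4)
        rw [intervalIntegral.integral_eq_sub_of_hasDerivAt (fun θ _ => hd θ)]
        · simp
        · exact (hFc.comp (by fun_prop : Continuous fun r : ℝ => (r, θ))).intervalIntegrable _ _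
      simp only [Prod.swap_prod_mk, this]
      rw [bint_eq, ← integral_Ioc_eq_integral_Ioo, ← intervalIntegral.integral_of_le hpi]
    · rw [← Measure.volume_eq_prod]
      have : Continuous fun p : ℝ × ℝ => Fr p.swap := hFc.comp continuous_swap
      exact (this.continuousOn.integrableOn_compact (isCompact_Icc.prod isCompact_Icc)).mono_set
        (Set.prod_mono Set.Ioo_subset_Icc_self Set.Ioo_subset_Icc_self)
  rw [e1, e2, add_zero]

lemma bpt_pow (θ : ℝ) (n : ℕ) : bpt θ ^ n = bpt (n * θ) := by
  unfold bpt; rw [← Complex.exp_nat_mul]; congr 1; push_cast; ring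

lemma bpt_conj (θ : ℝ) : starRingEnd ℂ (bpt θ) = bpt (-θ) := by
  unfold bpt; rw [← Complex.exp_conj]; congr 1; simp

lemma bpt_add (s t : ℝ) : bpt s * bpt t = bpt (s + t) := by
  unfold bpt; rw [← Complex.exp_add]; congr 1; push_cast; ring

lemma int_bpt (n : ℤ) (hn : n ≠ 0) : ∫ θ in (0:ℝ)..(2 * π), bpt (n * θ) = 0 := by
  unfold bpt
  have hc : (n : ℂ) * Complex.I ≠ 0 := by simp [hn, Complex.I_ne_zero]
  have := integral_exp_mul_complex (a := 0) (b := 2 * π) hc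
  have h2 : ∀ θ : ℝ, (((n * θ : ℝ) : ℂ) * Complex.I) = (n : ℂ) * Complex.I * θ := by
    intro θ; push_cast; ring
  simp only [h2, this]
  have : Complex.exp ((n : ℂ) * Complex.I * ((2 * π : ℝ) : ℂ)) = 1 := by
    rw [Complex.exp_eq_one_iff]; exact ⟨n, by push_cast; ring⟩
  rw [this]; simp

lemma orth (n m : ℕ) : ∫ θ in (0:ℝ)..(2 * π), bpt θ ^ n * starRingEnd ℂ (bpt θ ^ m) =
    if n = m then (2 * π : ℂ) else 0 := by
  have h : ∀ θ : ℝ, bpt θ ^ n * starRingEnd ℂ (bpt θ ^ m) = bpt (((n : ℤ) - (m : ℤ) : ℤ) * θ) := by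
    intro θ
    rw [bpt_pow, bpt_pow, bpt_conj, bpt_add]; congr 1; push_cast; ring
  simp only [h]
  split_ifs with hnm
  · subst hnm; simp [bpt]
  · exact int_bpt _ (by omega)

lemma parseval_fin (b : ℕ → ℂ) (M : ℕ) :
    ∫ θ in (0:ℝ)..(2 * π), ‖∑ n ∈ Finset.range M, b n * bpt θ ^ n‖ ^ 2 =
      2 * π * ∑ n ∈ Finset.range M, ‖b n‖ ^ 2 := by
  have hb := bpt_cont
  have hc : Continuous fun θ => starRingEnd ℂ (bpt θ) := Complex.continuous_conj.comp hb
  apply Complex.ofReal_injective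
  rw [← intervalIntegral.integral_ofReal]
  have h : ∀ θ : ℝ, ((‖∑ n ∈ Finset.range M, b n * bpt θ ^ n‖ ^ 2 : ℝ) : ℂ) =
      ∑ n ∈ Finset.range M, ∑ m ∈ Finset.range M, (b n * starRingEnd ℂ (b m)) *
        (bpt θ ^ n * starRingEnd ℂ (bpt θ ^ m)) := by
    intro θ
    push_cast
    rw [← Complex.mul_conj', map_sum, Finset.sum_mul_sum]
    refine Finset.sum_congr rfl fun n _ => Finset.sum_congr rfl fun m _ => ?_
    rw [map_mul]; ring
  simp only [h]
  rw [intervalIntegral.integral_finsetSum]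
  · have : ∀ n ∈ Finset.range M, ∫ θ in (0:ℝ)..(2 * π), ∑ m ∈ Finset.range M, (b n * starRingEnd ℂ (b m)) *
        (bpt θ ^ n * starRingEnd ℂ (bpt θ ^ m)) = 2 * π * (‖b n‖ ^ 2 : ℂ) := by
      intro n hn
      rw [intervalIntegral.integral_finsetSum]
      · simp only [intervalIntegral.integral_const_mul, orth]
        simp only [mul_ite, mul_zero, Finset.sum_ite_eq, if_pos hn, Complex.mul_conj']
        ring
      · intro m _
        apply Continuous.intervalIntegrable
        simp only [map_pow]; fun_prop
    rw [Finset.sum_congr rfl this, ← Finset.mul_sum]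
    push_cast; rfl
  · intro n _
    apply Continuous.intervalIntegrable
    simp only [map_pow]; fun_prop

lemma lm_poly (a : ℕ → ℂ) (N : ℕ) :
    bint (fun x => Real.exp (2 * (∑ k ∈ Finset.range N, a k * x ^ (k + 1)).re)) ≤
      2 * π * Real.exp (∑ k ∈ Finset.range N, ((k : ℝ) + 1) * ‖a k‖ ^ 2) := by
  obtain ⟨b, hb, hM⟩ := lm_sum a N
  have hbs : Summable fun n => ‖b n‖ := by
    have := (hb 1).summable.norm; simpa using this
  have hbc := bpt_cont
  have hlim : Tendsto (fun M => ∫ θ in (0:ℝ)..(2 * π), ‖∑ n ∈ Finset.range M, b n * bpt θ ^ n‖ ^ 2) atTop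
      (nhds (bint (fun x => Real.exp (2 * (∑ k ∈ Finset.range N, a k * x ^ (k + 1)).re)))) := by
    unfold bint
    apply intervalIntegral.tendsto_integral_filter_of_dominated_convergence (fun _ => (∑' n, ‖b n‖) ^ 2)
    · refine Eventually.of_forall fun M => ?_
      apply Continuous.aestronglyMeasurable; fun_prop
    · refine Eventually.of_forall fun M => Eventually.of_forall fun θ _ => ?_
      rw [Real.norm_of_nonneg (by positivity)]
      gcongr
      refine (norm_sum_le _ _).trans ?_
      simp only [norm_mul, norm_pow, bpt_norm, one_pow, mul_one]
      exact hbs.sum_le_tsum _ (fun _ _ => norm_nonneg _)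
    · simp
    · refine Eventually.of_forall fun θ _ => ?_
      have h1 := ((hb (bpt θ)).tendsto_sum_nat.norm).pow 2
      rw [Complex.norm_exp, ← Real.exp_nat_mul] at h1
      exact_mod_cast h1
  refine le_of_tendsto' hlim fun M => ?_
  rw [parseval_fin]
  have h1 := hM M
  have := Real.pi_pos
  gcongr

lemma pair_coeff (V : ℝ → ℝ) (hV : Continuous V) (A : ℕ → ℂ) (N : ℕ)
    (hA : ∀ k < N, ∫ θ in (0:ℝ)..(2 * π), (V θ : ℂ) * starRingEnd ℂ (bpt θ ^ (k + 1)) = 2 * π * A k) :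
    ∫ θ in (0:ℝ)..(2 * π), V θ * (bpt θ * ∑ k ∈ Finset.range N, (2 * ((k : ℂ) + 1) * A k) * bpt θ ^ k).re =
      4 * π * ∑ k ∈ Finset.range N, ((k : ℝ) + 1) * ‖A k‖ ^ 2 := by
  have hb := bpt_cont
  have hc : Continuous fun θ => starRingEnd ℂ (bpt θ) := Complex.continuous_conj.comp hb
  have h : ∀ θ : ℝ, V θ * (bpt θ * ∑ k ∈ Finset.range N, (2 * ((k : ℂ) + 1) * A k) * bpt θ ^ k).re =
      ∑ k ∈ Finset.range N, Complex.reCLM ((2 * ((k : ℂ) + 1) * starRingEnd ℂ (A k)) * ((V θ : ℂ) * starRingEnd ℂ (bpt θ ^ (k + 1)))) := by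
    intro θ
    rw [Finset.mul_sum, Complex.re_sum, Finset.mul_sum]
    refine Finset.sum_congr rfl fun k _ => ?_
    rw [Complex.reCLM_apply, ← Complex.conj_re]
    rw [← Complex.re_ofReal_mul]
    congr 1
    simp only [map_mul, map_add, map_one, map_pow, Complex.conj_natCast, map_ofNat]
    ring
  simp only [h]
  rw [intervalIntegral.integral_finsetSum, Finset.mul_sum]
  · refine Finset.sum_congr rfl fun k hk => ?_
    rw [ContinuousLinearMap.intervalIntegral_comp_comm, intervalIntegral.integral_const_mul, hA k (by simpa using hk)]
    · rw [show (2 * ((k : ℂ) + 1) * starRingEnd ℂ (A k) * (2 * π * A k)) = ((4 * π * (((k : ℝ) + 1)) : ℝ) : ℂ) * (A k * starRingEnd ℂ (A k)) by push_cast; ring]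
      rw [Complex.mul_conj', Complex.reCLM_apply, Complex.re_ofReal_mul]
      norm_cast; ring
    · apply Continuous.intervalIntegrable
      simp only [map_pow]; fun_prop
  · intro k _
    apply Continuous.intervalIntegrable
    simp only [map_pow]; fun_prop

lemma dirichlet (v : ℂ → ℝ) (hv : ContDiff ℝ 1 v) (A : ℕ → ℂ) (N : ℕ)
    (hA : ∀ k < N, ∫ θ in (0:ℝ)..(2 * π), (v (bpt θ) : ℂ) * starRingEnd ℂ (bpt θ ^ (k + 1)) = 2 * π * A k) :
    4 * π * ∑ k ∈ Finset.range N, ((k : ℝ) + 1) * ‖A k‖ ^ 2 ≤ ∫ x in unitDisk, gradSq v x := by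
  have hb := bpt_cont
  have hc : Continuous fun θ => starRingEnd ℂ (bpt θ) := Complex.continuous_conj.comp hb
  set φ : ℂ → ℂ := fun z => ∑ k ∈ Finset.range N, (2 * ((k : ℂ) + 1) * A k) * z ^ k with hφ
  set g : ℂ → ℂ := fun z => ∑ k ∈ Finset.range N, 2 * A k * z ^ (k + 1) with hg
  set w : ℂ → ℝ := fun z => (g z).re with hw
  have hφd : Differentiable ℂ φ := by rw [hφ]; fun_prop
  have hgd : ∀ z, HasDerivAt g (φ z) z := by
    intro z
    refine HasDerivAt.fun_sum fun k _ => ?_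
    have := (hasDerivAt_pow (k + 1) z).const_mul (2 * A k)
    refine this.congr_deriv ?_
    push_cast
    ring
  have hgC : ContDiff ℝ 1 g := by rw [hg]; fun_prop
  have hwC : ContDiff ℝ 1 w := Complex.reCLM.contDiff.comp hgC
  have hfw : ∀ x y, fderiv ℝ w x y = (φ x * y).re := by
    intro x y
    have h1 : HasFDerivAt g _ x := (hgd x).hasFDerivAt.restrictScalars ℝ
    have h2 := (Complex.reCLM.hasFDerivAt (x := g x)).comp x h1
    have h3 : HasFDerivAt w _ x := h2
    rw [h3.fderiv]
    simp [mul_comm]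
  have G1 := green v hv φ hφd
  have G2 := green w hwC φ hφd
  have hvc := hv.continuous
  have e1 : bint (fun x => v x * (x * φ x).re) = 4 * π * ∑ k ∈ Finset.range N, ((k : ℝ) + 1) * ‖A k‖ ^ 2 := by
    unfold bint
    exact pair_coeff (fun θ => v (bpt θ)) (by fun_prop) A N hA
  have e2 : bint (fun x => w x * (x * φ x).re) = 4 * π * ∑ k ∈ Finset.range N, ((k : ℝ) + 1) * ‖A k‖ ^ 2 := by
    unfold bint
    refine pair_coeff (fun θ => w (bpt θ)) (hwC.continuous.comp hb) A N ?_
    intro k hk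
    have h : ∀ θ : ℝ, (w (bpt θ) : ℂ) * starRingEnd ℂ (bpt θ ^ (k + 1)) =
        ∑ j ∈ Finset.range N, (A j * (bpt θ ^ (j + 1) * starRingEnd ℂ (bpt θ ^ (k + 1)))
          + starRingEnd ℂ (A j) * (starRingEnd ℂ (bpt θ ^ (j + k + 2) * starRingEnd ℂ (bpt θ ^ 0)))) := by
      intro θ
      simp only [hw, Complex.re_eq_add_conj, hg, map_sum]
      rw [← Finset.sum_add_distrib, Finset.sum_div, Finset.sum_mul]
      refine Finset.sum_congr rfl fun j _ => ?_
      simp only [map_mul, map_pow, map_ofNat, map_one, pow_zero]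
      ring
    simp only [h]
    have horth : ∀ j : ℕ, ∫ θ in (0:ℝ)..(2 * π), starRingEnd ℂ (bpt θ ^ (j + k + 2) * starRingEnd ℂ (bpt θ ^ 0)) = 0 := by
      intro j
      have h1 := orth (j + k + 2) 0
      rw [if_neg (by omega)] at h1
      have h2 := congrArg (starRingEnd ℂ) h1
      rw [map_zero] at h2
      rw [← h2, intervalIntegral.integral_of_le (by positivity), intervalIntegral.integral_of_le (by positivity), integral_conj]
    rw [intervalIntegral.integral_finsetSum]
    · have : ∀ j ∈ Finset.range N, ∫ θ in (0:ℝ)..(2 * π), (A j * (bpt θ ^ (j + 1) * starRingEnd ℂ (bpt θ ^ (k + 1)))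
          + starRingEnd ℂ (A j) * (starRingEnd ℂ (bpt θ ^ (j + k + 2) * starRingEnd ℂ (bpt θ ^ 0)))) = 
          if j = k then 2 * π * A k else 0 := by
        intro j _
        rw [intervalIntegral.integral_add, intervalIntegral.integral_const_mul, intervalIntegral.integral_const_mul, horth, orth]
        · by_cases hjk : j = k
          · simp [hjk]; ring
          · simp [hjk]
        · apply Continuous.intervalIntegrable
          simp only [map_pow]; fun_prop
        · apply Continuous.intervalIntegrable
          simp only [map_pow, map_mul, pow_zero, map_one]; fun_prop
      rw [Finset.sum_congr rfl this]
      simp [hk]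
    · intro j _
      apply Continuous.intervalIntegrable
      simp only [map_pow, map_mul, pow_zero, map_one]; fun_prop
  have hfd : Continuous (fderiv ℝ v) := hv.continuous_fderiv (by norm_num)
  have hcφ : Continuous fun x => starRingEnd ℂ (φ x) := Complex.continuous_conj.comp hφd.continuous
  have c1 : Continuous fun x => fderiv ℝ v x (starRingEnd ℂ (φ x)) := hfd.clm_apply hcφ
  have c2 : Continuous fun x => fderiv ℝ w x (starRingEnd ℂ (φ x)) :=
    (hwC.continuous_fderiv (by norm_num)).clm_apply hcφ
  have c3 : Continuous (gradSq v) := by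
    unfold gradSq pd; fun_prop
  have hle : ∫ x in unitDisk, (2 * fderiv ℝ v x (starRingEnd ℂ (φ x)) - fderiv ℝ w x (starRingEnd ℂ (φ x))) ≤
      ∫ x in unitDisk, gradSq v x := by
    apply setIntegral_mono_on
    · exact intOn_disk (by fun_prop)
    · exact intOn_disk c3.continuousOn
    · exact measurableSet_ball
    · intro x _
      rw [hfw, fderiv_decomp]
      unfold gradSq
      simp only [Complex.mul_re, Complex.conj_re, Complex.conj_im]
      nlinarith [sq_nonneg ((φ x).re - pd v 1 x), sq_nonneg ((φ x).im + pd v Complex.I x)]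
  rw [integral_sub, integral_const_mul, G1, G2, e1, e2] at hle
  · linarith
  · exact intOn_disk (by fun_prop)
  · exact intOn_disk c2.continuousOn

/-- Fourier coefficients on `[0, 2π]`. -/
def fc (F : ℝ → ℂ) (n : ℤ) : ℂ := (2 * π : ℂ)⁻¹ * ∫ θ in (0:ℝ)..(2 * π), bpt (-(n * θ)) * F θ

lemma fourier_bpt (T : ℝ) (hT : T = 2 * π) (n : ℤ) (x : ℝ) : fourier n (x : AddCircle T) = bpt (n * x) := by
  subst hT
  rw [fourier_coe_apply]
  unfold bpt
  congr 1
  have : (π : ℂ) ≠ 0 := by exact_mod_cast Real.pi_ne_zero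
  push_cast
  field_simp

lemma fcOn (F : ℝ → ℂ) (n : ℤ) : fourierCoeffOn Real.two_pi_pos F n = fc F n := by
  rw [fourierCoeffOn_eq_integral]
  unfold fc
  simp only [fourier_bpt _ (sub_zero (2 * π)), smul_eq_mul, sub_zero]
  rw [Complex.real_smul]
  push_cast
  rw [one_div]
  congr 1
  refine intervalIntegral.integral_congr fun θ _ => ?_
  simp only [neg_mul]

lemma fc_summable (F F' : ℝ → ℂ) (hF : ∀ x, HasDerivAt F (F' x) x) (hF' : Continuous F')
    (hper : F (2 * π) = F 0) : Summable fun n : ℤ => ‖fc F n‖ := by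
  have h2 : Summable fun n : ℤ => ‖fc F' n‖ ^ 2 := by
    have hL : MemLp F' 2 (volume.restrict (Set.Ioc 0 (2 * π))) := by
      have hb : ∃ C, ∀ x ∈ Set.Icc 0 (2 * π), ‖F' x‖ ≤ C :=
        isCompact_Icc.exists_bound_of_continuousOn hF'.continuousOn
      obtain ⟨C, hC⟩ := hb
      refine MemLp.of_bound hF'.aestronglyMeasurable C ?_
      filter_upwards [ae_restrict_mem measurableSet_Ioc] with x hx
      exact hC x ⟨hx.1.le, hx.2⟩
    have := (hasSum_sq_fourierCoeffOn Real.two_pi_pos hL).summable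
    simpa only [fcOn] using this
  have h3 : Summable fun n : ℤ => 1 / (n : ℝ) ^ 2 := Real.summable_one_div_int_pow.mpr (by norm_num)
  have h4 := (h2.add h3)
  refine Summable.of_norm_bounded_eventually h4 ?_
  have : ∀ᶠ n : ℤ in cofinite, n ≠ 0 := by
    exact (Set.finite_singleton (0:ℤ)).subset (by intro n; simp)
  filter_upwards [this] with n hn
  have h5 := fourierCoeffOn_of_hasDerivAt Real.two_pi_pos hn (fun x _ => hF x) (hF'.intervalIntegrable _ _)
  rw [fcOn, fcOn, hper, sub_self, mul_zero] at h5
  have h6 : ‖fc F n‖ = 1 / |(n : ℝ)| * ‖fc F' n‖ := by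
    rw [h5]
    have hpi := Real.pi_pos
    simp only [norm_mul, norm_div, norm_neg, norm_one, zero_sub, Complex.norm_real, Complex.norm_I, Complex.norm_intCast,
      Complex.norm_ofNat, Complex.ofReal_zero, sub_zero, Complex.ofReal_mul, Complex.ofReal_ofNat, Real.norm_of_nonneg hpi.le]
    have : |(n : ℝ)| ≠ 0 := by simpa using hn
    field_simp
  rw [norm_norm, h6]
  have : 1 / (n : ℝ) ^ 2 = (1 / |(n : ℝ)|) ^ 2 := by rw [div_pow, sq_abs, one_pow]
  rw [this]
  nlinarith [sq_nonneg (1 / |(n : ℝ)| - ‖fc F' n‖), sq_nonneg (1 / |(n : ℝ)|), sq_nonneg (‖fc F' n‖)]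

lemma fc_hasSum (F : ℝ → ℂ) (hc : Continuous F) (hper : Function.Periodic F (2 * π))
    (hs : Summable fun n : ℤ => ‖fc F n‖) (θ : ℝ) :
    HasSum (fun n : ℤ => fc F n * bpt (n * θ)) (F θ) := by
  have : Fact (0 < 2 * π) := ⟨Real.two_pi_pos⟩
  let f : C(AddCircle (2 * π), ℂ) := ⟨hper.lift, continuous_coinduced_dom.mpr hc⟩
  have hfc : ∀ n, fourierCoeff f n = fc F n := by
    intro n
    rw [fourierCoeff_eq_intervalIntegral f n 0]
    unfold fc
    rw [Complex.real_smul, zero_add]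
    push_cast
    rw [one_div]
    congr 1
    refine intervalIntegral.integral_congr fun t _ => ?_
    simp only [fourier_bpt _ rfl, smul_eq_mul]
    congr 2
    push_cast; ring
  have h1 : Summable (fourierCoeff f) := by
    refine Summable.of_norm ?_
    simpa only [hfc] using hs
  have := has_pointwise_sum_fourier_series_of_summable h1 (θ : AddCircle (2 * π))
  simp only [hfc, fourier_bpt _ rfl, smul_eq_mul] at this
  exact this

/-- Lebedev–Milin inequality. -/
lemma lebedev_milin (v : ℂ → ℝ) (hv : ContDiff ℝ 1 v) :
    bint (fun x => Real.exp (v x)) ≤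
      2 * π * Real.exp ((2 * π)⁻¹ * bint v + (4 * π)⁻¹ * ∫ x in unitDisk, gradSq v x) := by
  have hpi := Real.pi_pos
  have hb := bpt_cont
  have hvc := hv.continuous
  set F : ℝ → ℂ := fun θ => (v (bpt θ) : ℂ) with hFdef
  have hFd : ∀ θ, HasDerivAt F ((fderiv ℝ v (bpt θ) (Complex.I * bpt θ) : ℝ) : ℂ) θ := by
    intro θ
    have d2 := ((hv.differentiable (by norm_num)) (bpt θ)).hasFDerivAt.comp_hasDerivAt θ (bpt_deriv θ)
    exact d2.ofReal_comp
  have hF'c : Continuous fun θ => ((fderiv ℝ v (bpt θ) (Complex.I * bpt θ) : ℝ) : ℂ) := by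
    have hfd : Continuous (fderiv ℝ v) := hv.continuous_fderiv (by norm_num)
    exact Complex.continuous_ofReal.comp ((hfd.comp hb).clm_apply (by fun_prop))
  have hFper : Function.Periodic F (2 * π) := fun θ => by simp only [hFdef, bpt_per θ]
  have hs := fc_summable F _ hFd hF'c (by simpa using hFper 0)
  have hsum := fc_hasSum F (by fun_prop) hFper hs
  set A : ℕ → ℂ := fun k => fc F ((k : ℤ) + 1) with hAdef
  have hAs : Summable fun k => ‖A k‖ := by
    have h1 : Function.Injective fun k : ℕ => (k : ℤ) + 1 := fun a b h => by simpa using h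
    exact hs.comp_injective h1
  have hA : ∀ k, ∫ θ in (0:ℝ)..(2 * π), (v (bpt θ) : ℂ) * starRingEnd ℂ (bpt θ ^ (k + 1)) = 2 * π * A k := by
    intro k
    simp only [hAdef, fc]
    rw [← mul_assoc, mul_inv_cancel₀ (by exact_mod_cast (by positivity : (2 * π) ≠ 0)), one_mul]
    refine intervalIntegral.integral_congr fun t _ => ?_
    simp only [bpt_pow, bpt_conj, hFdef]
    rw [mul_comm]
    push_cast; rfl
  set a0 : ℝ := (2 * π)⁻¹ * bint v with ha0
  have hfc0 : fc F 0 = a0 := by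
    simp only [fc, ha0, bint, hFdef]
    push_cast
    rw [← intervalIntegral.integral_ofReal]
    simp [bpt]
  have hneg : ∀ n : ℕ, ∀ θ : ℝ, fc F (-((n : ℤ) + 1)) * bpt (((-((n : ℤ) + 1) : ℤ) : ℝ) * θ) = starRingEnd ℂ (A n * bpt θ ^ (n + 1)) := by
    intro n θ
    rw [map_mul, bpt_pow, bpt_conj]
    congr 1
    · simp only [hAdef, fc, map_mul]
      congr 1
      · rw [map_inv₀, map_mul, Complex.conj_ofReal]; congr 2; exact (map_ofNat (starRingEnd ℂ) 2).symm
      rw [intervalIntegral.integral_of_le (by positivity), intervalIntegral.integral_of_le (by positivity), ← integral_conj]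
      refine integral_congr_ae (Eventually.of_forall fun t => ?_)
      simp only [map_mul, bpt_conj, hFdef, Complex.conj_ofReal]
      congr 2; push_cast; ring
    · congr 1; push_cast; ring
  have hpt : ∀ θ : ℝ, HasSum (fun n : ℕ => 2 * (A n * bpt θ ^ (n + 1)).re) (v (bpt θ) - a0) := by
    intro θ
    have h1 := (hsum θ).nat_add_neg
    have h2 := (hasSum_nat_add_iff' 1).mpr h1
    have h3 := Complex.hasSum_re h2
    convert h3 using 1
    · funext n
      have h4 := hneg n θ
      have h5 : fc F ((n : ℤ) + 1) * bpt ((((n : ℤ) + 1 : ℤ) : ℝ) * θ) = A n * bpt θ ^ (n + 1) := by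
        rw [bpt_pow]; simp only [hAdef]; push_cast; rfl
      push_cast at h4 h5 ⊢
      rw [h4, h5, Complex.add_re, Complex.conj_re]; ring
    · rw [Finset.sum_range_one, Nat.cast_zero, neg_zero, hfc0]
      simp [hFdef, bpt]
  have hlim : Tendsto (fun N => bint (fun x => Real.exp (a0) * Real.exp (2 * (∑ k ∈ Finset.range N, A k * x ^ (k + 1)).re))) atTop
      (nhds (bint (fun x => Real.exp (v x)))) := by
    unfold bint
    apply intervalIntegral.tendsto_integral_filter_of_dominated_convergence
      (fun _ => Real.exp a0 * Real.exp (2 * ∑' n, ‖A n‖))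
    · refine Eventually.of_forall fun M => ?_
      apply Continuous.aestronglyMeasurable
      have : Continuous fun θ => (∑ k ∈ Finset.range M, A k * bpt θ ^ (k + 1)).re := Complex.continuous_re.comp (by fun_prop)
      fun_prop
    · refine Eventually.of_forall fun M => Eventually.of_forall fun θ _ => ?_
      rw [Real.norm_of_nonneg (by positivity)]
      refine mul_le_mul_of_nonneg_left (Real.exp_le_exp.mpr (mul_le_mul_of_nonneg_left ?_ zero_le_two)) (Real.exp_pos _).le
      refine (Complex.re_le_norm _).trans ((norm_sum_le _ _).trans ?_)
      simp only [norm_mul, norm_pow, bpt_norm, one_pow, mul_one]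
      exact hAs.sum_le_tsum _ (fun _ _ => norm_nonneg _)
    · simp
    · refine Eventually.of_forall fun θ _ => ?_
      have h1 := (hpt θ).tendsto_sum_nat
      have h2 : Tendsto (fun N => a0 + 2 * (∑ k ∈ Finset.range N, A k * bpt θ ^ (k + 1)).re) atTop (nhds (v (bpt θ))) := by
        have := h1.const_add a0
        simp only [add_sub_cancel] at this
        refine this.congr fun N => ?_
        rw [Complex.re_sum, Finset.mul_sum]
      have h3 := (Real.continuous_exp.tendsto _).comp h2
      refine h3.congr fun N => ?_
      simp [Real.exp_add]
  refine le_of_tendsto' hlim fun N => ?_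
  have h1 := lm_poly A N
  have h2 := dirichlet v hv A N (fun k _ => hA k)
  have h3 : bint (fun x => Real.exp (a0) * Real.exp (2 * (∑ k ∈ Finset.range N, A k * x ^ (k + 1)).re)) =
      Real.exp a0 * bint (fun x => Real.exp (2 * (∑ k ∈ Finset.range N, A k * x ^ (k + 1)).re)) := by
    unfold bint
    rw [intervalIntegral.integral_const_mul]
  rw [h3, Real.exp_add]
  have h4 : ∑ k ∈ Finset.range N, ((k : ℝ) + 1) * ‖A k‖ ^ 2 ≤ (4 * π)⁻¹ * ∫ x in unitDisk, gradSq v x := by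
    rw [le_inv_mul_iff₀ (by positivity)]; exact h2
  calc _ ≤ Real.exp a0 * (2 * π * Real.exp (∑ k ∈ Finset.range N, ((k : ℝ) + 1) * ‖A k‖ ^ 2)) := by gcongr
    _ ≤ Real.exp a0 * (2 * π * Real.exp ((4 * π)⁻¹ * ∫ x in unitDisk, gradSq v x)) := by gcongr
    _ = _ := by ring

lemma gradSq_cont {u : ℂ → ℝ} (hu : ContDiff ℝ 1 u) : Continuous (gradSq u) := by
  have hfd : Continuous (fderiv ℝ u) := hu.continuous_fderiv (by norm_num)
  unfold gradSq pd; fun_prop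

lemma gradSq_nonneg (u : ℂ → ℝ) (x : ℂ) : 0 ≤ gradSq u x := by
  unfold gradSq; positivity

lemma T_nonneg (u : ℂ → ℝ) : 0 ≤ Tfun u := by
  unfold Tfun
  refine integral_nonneg fun x => ?_
  have := Real.add_one_le_exp (u x)
  have := gradSq_nonneg u x
  simp only [Pi.zero_apply]
  linarith

lemma h_bound (h : ℂ → ℝ) (hh : Continuous (fun θ => h (bpt θ))) :
    ∃ H, 0 ≤ H ∧ ∀ θ, |h (bpt θ)| ≤ H := by
  obtain ⟨C, hC⟩ := isCompact_Icc.exists_bound_of_continuousOn (s := Set.Icc 0 (2 * π)) hh.continuousOn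
  refine ⟨max C 0, le_max_right _ _, fun θ => ?_⟩
  have hp : Function.Periodic (fun θ => h (bpt θ)) (2 * π) := fun θ => by simp only [bpt_per θ]
  obtain ⟨y, hy, hyθ⟩ := hp.exists_mem_Ico₀ Real.two_pi_pos θ
  have hyθ' : h (bpt θ) = h (bpt y) := hyθ
  rw [hyθ']
  exact (hC y ⟨hy.1, hy.2.le⟩).trans (le_max_left _ _)

lemma lower_bound (K h : ℂ → ℝ) (hK : Continuous K) (hKneg : ∀ x ∈ closedUnitDisk, K x < 0)
    (hh : Continuous (fun θ => h (bpt θ))) :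
    ∃ C : ℝ, ∀ u : ℂ → ℝ, ContDiff ℝ 1 u → bint (fun x => Real.exp (u x / 2)) = 1 → -C ≤ Ifun K h u := by
  obtain ⟨H, hH0, hH⟩ := h_bound h hh
  have hpi := Real.pi_pos
  refine ⟨8 * π * Real.log (2 * π) + 4 * H, fun u hu h1 => ?_⟩
  have huc := hu.continuous
  have hb := bpt_cont
  have hLM := lebedev_milin (fun x => u x / 2) (hu.div_const 2)
  rw [h1] at hLM
  have e1 : bint (fun x => u x / 2) = bint u / 2 := by
    unfold bint; rw [intervalIntegral.integral_div]
  have e2 : ∀ x, gradSq (fun x => u x / 2) x = gradSq u x / 4 := by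
    intro x
    have : fderiv ℝ (fun x => u x / 2) x = (2:ℝ)⁻¹ • fderiv ℝ u x := by
      simp only [div_eq_inv_mul]
      exact fderiv_const_mul (hu.differentiable (by norm_num) x) _
    unfold gradSq pd
    rw [this]
    simp only [ContinuousLinearMap.smul_apply, smul_eq_mul]
    ring
  simp only [e2] at hLM
  rw [integral_div, e1] at hLM
  set D := ∫ x in unitDisk, gradSq u x with hD
  have h2 : 0 ≤ Real.log (2 * π) + ((2 * π)⁻¹ * (bint u / 2) + (4 * π)⁻¹ * (D / 4)) := by
    have := Real.log_le_log one_pos hLM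
    rwa [Real.log_one, Real.log_mul (by positivity) (by positivity), Real.log_exp] at this
  have h3 : 0 ≤ 8 * π * Real.log (2 * π) + 2 * bint u + D / 2 := by
    have := mul_nonneg (by positivity : 0 ≤ 8 * π) h2
    have e : 8 * π * (Real.log (2 * π) + ((2 * π)⁻¹ * (bint u / 2) + (4 * π)⁻¹ * (D / 4))) =
        8 * π * Real.log (2 * π) + 2 * bint u + D / 2 := by
      field_simp; ring
    linarith
  have gc := gradSq_cont hu
  have h4 : D / 2 ≤ ∫ x in unitDisk, ((1/2) * gradSq u x - 2 * K x * Real.exp (u x)) := by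
    rw [hD, ← integral_div]
    apply setIntegral_mono_on
    · exact intOn_disk (by fun_prop)
    · exact intOn_disk (by fun_prop)
    · exact measurableSet_ball
    · intro x hx
      have := mul_pos (neg_pos.mpr (hKneg x (Metric.ball_subset_closedBall hx))) (Real.exp_pos (u x))
      nlinarith
  have h5 : 2 * bint u - 4 * H ≤ bint (fun x => 2 * u x - 4 * h x * Real.exp (u x / 2)) := by
    have : 2 * bint u - 4 * H = bint (fun x => 2 * u x - 4 * H * Real.exp (u x / 2)) := by
      have e : bint (fun x => 2 * u x - 4 * H * Real.exp (u x / 2)) = 2 * bint u - 4 * H * bint (fun x => Real.exp (u x / 2)) := by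
        unfold bint
        rw [intervalIntegral.integral_sub, intervalIntegral.integral_const_mul, intervalIntegral.integral_const_mul]
        · exact (by fun_prop : Continuous _).intervalIntegrable _ _
        · exact (by fun_prop : Continuous _).intervalIntegrable _ _
      rw [e, h1]; ring
    rw [this]
    unfold bint
    have hcc : Continuous fun θ => 2 * u (bpt θ) - 4 * h (bpt θ) * Real.exp (u (bpt θ) / 2) :=
      (by fun_prop : Continuous fun θ => 2 * u (bpt θ)).sub
        ((hh.const_mul 4).mul (by fun_prop : Continuous fun θ => Real.exp (u (bpt θ) / 2)))
    apply intervalIntegral.integral_mono_on (by positivity)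
    · exact (by fun_prop : Continuous _).intervalIntegrable _ _
    · exact hcc.intervalIntegrable _ _
    · intro θ _
      have := mul_le_mul_of_nonneg_right ((le_abs_self _).trans (hH θ)) (Real.exp_pos (u (bpt θ) / 2)).le
      linarith
  unfold Ifun
  linarith

/-- the linear form `x ↦ Re (x conj x₀)` -/
def sl (x₀ : ℂ) : ℂ →L[ℝ] ℝ := x₀.re • Complex.reCLM + x₀.im • Complex.imCLM

lemma sl_apply (x₀ x : ℂ) : sl x₀ x = x₀.re * x.re + x₀.im * x.im := by
  simp [sl]

lemma sl_le (x₀ x : ℂ) (h0 : ‖x₀‖ = 1) : sl x₀ x ≤ ‖x‖ := by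
  have h1 : sl x₀ x = (x * starRingEnd ℂ x₀).re := by
    rw [sl_apply]; simp [Complex.mul_re]; ring
  rw [h1]
  refine (Complex.re_le_norm _).trans ?_
  rw [norm_mul, Complex.norm_conj, h0, mul_one]

lemma exists_w (x₀ : ℂ) (δ : ℝ) (hδ : 0 < δ) : ∃ w : ℂ → ℝ, ContDiff ℝ 1 w ∧ (∀ x, 0 < w x) ∧
    (∀ x, sl x₀ x ≤ 1 → w x = (1 + δ - sl x₀ x)⁻¹) ∧
    (∀ x, sl x₀ x < 1 → HasFDerivAt w ((w x ^ 2) • sl x₀) x) := by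
  let σ : ℝ → ℝ := fun t => Real.smoothTransition ((t - 1) / δ)
  have hσ : ContDiff ℝ 1 σ := Real.smoothTransition.contDiff.comp (by fun_prop)
  let q : ℝ → ℝ := fun t => (1 + δ - t) * (1 - σ t) + δ * σ t
  have hq : ContDiff ℝ 1 q := by fun_prop
  have hq1 : ∀ t ≤ 1, q t = 1 + δ - t := by
    intro t ht
    have : σ t = 0 := Real.smoothTransition.zero_of_nonpos (div_nonpos_of_nonpos_of_nonneg (by linarith) hδ.le)
    simp only [q, this]; ring
  have hqpos : ∀ t, 0 < q t := by
    intro t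
    have h0 : 0 ≤ σ t := Real.smoothTransition.nonneg _
    have h1 : σ t ≤ 1 := Real.smoothTransition.le_one _
    rcases lt_or_ge t (1 + δ) with ht | ht
    · rcases eq_or_lt_of_le h1 with h | h
      · simp only [q, h]; linarith
      · have := mul_pos (by linarith : 0 < 1 + δ - t) (by linarith : 0 < 1 - σ t)
        have := mul_nonneg hδ.le h0
        simp only [q]; linarith
    · have : σ t = 1 := Real.smoothTransition.one_of_one_le (by rw [le_div_iff₀ hδ]; linarith)
      simp only [q, this]; linarith
  have hval : ∀ x, sl x₀ x ≤ 1 → (q (sl x₀ x))⁻¹ = (1 + δ - sl x₀ x)⁻¹ := fun x hx => by rw [hq1 _ hx]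
  refine ⟨fun x => (q (sl x₀ x))⁻¹, ?_, fun x => inv_pos.mpr (hqpos _), hval, ?_⟩
  · exact (hq.comp (sl x₀).contDiff).inv fun x => (hqpos _).ne'
  · intro x hx
    have hne : (1 + δ - sl x₀ x) ≠ 0 := by linarith
    have h1 : HasFDerivAt (fun x => (1 + δ - sl x₀ x)) (-(sl x₀)) x := ((sl x₀).hasFDerivAt).const_sub _
    have h2 := (hasDerivAt_inv hne).comp_hasFDerivAt x h1
    have h3 : (fun x => (q (sl x₀ x))⁻¹) =ᶠ[nhds x] (fun x => (1 + δ - sl x₀ x)⁻¹) := by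
      have : ∀ᶠ y in nhds x, sl x₀ y < 1 := (sl x₀).continuous.continuousAt.eventually_lt continuousAt_const hx
      filter_upwards [this] with y hy using hval y hy.le
    have h4 := h2.congr_of_eventuallyEq h3
    refine h4.congr_fderiv ?_
    beta_reduce
    rw [hval x hx.le]
    simp

lemma bint_shift (f : ℂ → ℝ) (θ₀ : ℝ) : bint f = ∫ θ in (θ₀ - π)..(θ₀ + π), f (bpt θ) := by
  have : Function.Periodic (fun θ => f (bpt θ)) (2 * π) := fun θ => by
    simp only [bpt_per θ]
  unfold bint
  have h := this.intervalIntegral_add_eq 0 (θ₀ - π)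
  rw [zero_add] at h
  rw [h]
  congr 1; ring

lemma sl_bpt (θ₀ θ : ℝ) : sl (bpt θ₀) (bpt θ) = Real.cos (θ - θ₀) := by
  have h : ∀ t, (bpt t).re = Real.cos t ∧ (bpt t).im = Real.sin t := fun t => by
    unfold bpt; exact ⟨Complex.exp_ofReal_mul_I_re t, Complex.exp_ofReal_mul_I_im t⟩
  rw [sl_apply, (h θ).1, (h θ).2, (h θ₀).1, (h θ₀).2, Real.cos_sub]; ring

lemma B_large (θ₀ δ : ℝ) (hδ : 0 < δ) (hδ1 : δ < 1) (w : ℂ → ℝ) (hw : Continuous w) (hpos : ∀ x, 0 < w x)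
    (hval : ∀ x, sl (bpt θ₀) x ≤ 1 → w x = (1 + δ - sl (bpt θ₀) x)⁻¹) :
    (2 * Real.sqrt δ)⁻¹ ≤ bint w := by
  have hs : 0 < Real.sqrt δ := Real.sqrt_pos.mpr hδ
  have hs1 : Real.sqrt δ < 1 := by
    rw [Real.sqrt_lt' one_pos]; simpa using hδ1
  have hsq : Real.sqrt δ ^ 2 = δ := Real.sq_sqrt hδ.le
  have hpi := Real.pi_gt_three
  have hb := bpt_cont
  rw [bint_shift w θ₀]
  have hc : Continuous fun θ => w (bpt θ) := by fun_prop
  have h1 : ∫ θ in θ₀..(θ₀ + Real.sqrt δ), w (bpt θ) ≤ ∫ θ in (θ₀ - π)..(θ₀ + π), w (bpt θ) := by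
    apply intervalIntegral.integral_mono_interval (by linarith) (by linarith) (by linarith)
    · exact Eventually.of_forall fun θ => (hpos _).le
    · exact hc.intervalIntegrable _ _
  refine le_trans ?_ h1
  have h2 : ∫ θ in θ₀..(θ₀ + Real.sqrt δ), (2 * δ)⁻¹ ≤ ∫ θ in θ₀..(θ₀ + Real.sqrt δ), w (bpt θ) := by
    apply intervalIntegral.integral_mono_on (by linarith)
    · simp
    · exact hc.intervalIntegrable _ _
    · intro θ hθ
      rw [hval _ (by rw [sl_bpt]; exact Real.cos_le_one _), sl_bpt]
      have h3 := Real.one_sub_sq_div_two_le_cos (x := θ - θ₀)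
      have h4 := Real.cos_le_one (θ - θ₀)
      have h5 : (θ - θ₀) ^ 2 ≤ δ := by
        rw [← hsq]
        exact pow_le_pow_left₀ (by linarith [hθ.1]) (by linarith [hθ.2]) 2
      apply inv_anti₀ <;> linarith
  refine le_trans (le_of_eq ?_) h2
  rw [intervalIntegral.integral_const, smul_eq_mul, add_sub_cancel_left]
  field_simp
  rw [hsq]

lemma disk_sub (x₀ x : ℂ) (h0 : ‖x₀‖ = 1) (hx : x ∈ unitDisk) : sl x₀ x < 1 :=
  (sl_le x₀ x h0).trans_lt (by simpa [unitDisk] using hx)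

lemma J_eq (θ₀ δ : ℝ) (w : ℂ → ℝ) (hw : ContDiff ℝ 1 w)
    (hδ : 0 < δ)
    (hval : ∀ x, sl (bpt θ₀) x ≤ 1 → w x = (1 + δ - sl (bpt θ₀) x)⁻¹)
    (hder : ∀ x, sl (bpt θ₀) x < 1 → HasFDerivAt w ((w x ^ 2) • sl (bpt θ₀)) x) :
    ∫ x in unitDisk, w x ^ 2 ≤ (1 + δ) * bint w := by
  have hb := bpt_cont
  have hwc := hw.continuous
  have G := green w hw (fun _ => starRingEnd ℂ (bpt θ₀)) (by fun_prop)
  have e1 : ∫ x in unitDisk, fderiv ℝ w x (starRingEnd ℂ (starRingEnd ℂ (bpt θ₀))) = ∫ x in unitDisk, w x ^ 2 := by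
    apply setIntegral_congr_fun measurableSet_ball
    intro x hx
    have := (hder x (disk_sub _ _ (bpt_norm θ₀) hx)).fderiv
    simp only [this, Complex.conj_conj, ContinuousLinearMap.smul_apply, smul_eq_mul, sl_bpt, sub_self, Real.cos_zero, mul_one]
  rw [← e1, G]
  have : (1 + δ) * bint w = bint (fun x => (1 + δ) * w x) := by
    unfold bint; rw [intervalIntegral.integral_const_mul]
  rw [this]
  unfold bint
  have hc : Continuous fun θ => (bpt θ * starRingEnd ℂ (bpt θ₀)).re := Complex.continuous_re.comp (by fun_prop)
  apply intervalIntegral.integral_mono_on (by positivity)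
  · exact (by fun_prop : Continuous _).intervalIntegrable _ _
  · exact (by fun_prop : Continuous _).intervalIntegrable _ _
  · intro θ _
    have h1 : (bpt θ * starRingEnd ℂ (bpt θ₀)).re = sl (bpt θ₀) (bpt θ) := by
      rw [sl_apply]; simp [Complex.mul_re]; ring
    have h2 : sl (bpt θ₀) (bpt θ) ≤ 1 := by rw [sl_bpt]; exact Real.cos_le_one _
    have h3 : 0 < w (bpt θ) := by
      rw [hval _ h2]; apply inv_pos.mpr; linarith
    beta_reduce
    rw [h1, mul_comm]
    apply mul_le_mul_of_nonneg_right _ h3.le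
    linarith

lemma disk_bd (K : ℂ → ℝ) (hK : Continuous K) (x₀ : ℂ) (h0 : ‖x₀‖ = 1) (hK0 : K x₀ < 0)
    (η : ℝ) (hη : 0 < η) :
    ∃ M : ℝ, ∀ δ : ℝ, 0 < δ → ∀ w : ℂ → ℝ, (∀ x, 0 < w x) →
      (∀ x, sl x₀ x ≤ 1 → w x = (1 + δ - sl x₀ x)⁻¹) →
      ∀ x ∈ unitDisk, -K x * w x ^ 2 ≤ (-K x₀ + η) * w x ^ 2 + M := by
  obtain ⟨r, hr, hKr⟩ := Metric.continuous_iff.mp hK x₀ η hη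
  obtain ⟨C, hC⟩ := (isCompact_closedBall (0:ℂ) 1).exists_bound_of_continuousOn hK.continuousOn
  have hC0 : 0 ≤ C := (norm_nonneg _).trans (hC 0 (by simp))
  refine ⟨C * (2 / r ^ 2) ^ 2, fun δ hδ w hpos hval x hx => ?_⟩
  have hw2 : 0 < w x ^ 2 := pow_pos (hpos x) 2
  have hMn : 0 ≤ C * (2 / r ^ 2) ^ 2 := by positivity
  rcases lt_or_ge (dist x x₀) r with hd | hd
  · have h1 := hKr x hd
    rw [Real.dist_eq, abs_lt] at h1
    have := mul_le_mul_of_nonneg_right (by linarith [h1.1] : -K x ≤ -K x₀ + η) hw2.le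
    linarith
  · have hs := disk_sub x₀ x h0 hx
    have hxn : ‖x‖ < 1 := by simpa [unitDisk] using hx
    have h2 : r ^ 2 ≤ 2 - 2 * sl x₀ x := by
      have h3 : r ^ 2 ≤ ‖x - x₀‖ ^ 2 := by
        rw [← dist_eq_norm]; exact pow_le_pow_left₀ hr.le hd 2
      have h4 : ‖x - x₀‖ ^ 2 = ‖x‖ ^ 2 + ‖x₀‖ ^ 2 - 2 * sl x₀ x := by
        rw [sl_apply, Complex.sq_norm, Complex.sq_norm, Complex.sq_norm]
        simp only [Complex.normSq_apply, Complex.sub_re, Complex.sub_im]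
        ring
      have h5 : ‖x‖ ^ 2 ≤ 1 := pow_le_one₀ (norm_nonneg _) hxn.le
      rw [h4, h0] at h3
      linarith
    have hw : w x ≤ 2 / r ^ 2 := by
      rw [hval x hs.le, ← inv_div]
      apply inv_anti₀ (by positivity)
      linarith
    have h6 : w x ^ 2 ≤ (2 / r ^ 2) ^ 2 := pow_le_pow_left₀ (hpos x).le hw 2
    have h7 : -K x ≤ C := (neg_le_abs _).trans (hC x (Metric.ball_subset_closedBall hx))
    have h8 : -K x * w x ^ 2 ≤ C * w x ^ 2 := mul_le_mul_of_nonneg_right h7 hw2.le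
    have h9 : C * w x ^ 2 ≤ C * (2 / r ^ 2) ^ 2 := mul_le_mul_of_nonneg_left h6 hC0
    have h10 : 0 ≤ (-K x₀ + η) * w x ^ 2 := mul_nonneg (by linarith) hw2.le
    linarith

lemma circ_bd (h : ℂ → ℝ) (hh : Continuous (fun θ => h (bpt θ))) (θ₀ : ℝ) (h0 : 0 ≤ h (bpt θ₀))
    (η : ℝ) (hη : 0 < η) :
    ∃ M : ℝ, ∀ δ : ℝ, 0 < δ → ∀ w : ℂ → ℝ, (∀ x, 0 < w x) →
      (∀ x, sl (bpt θ₀) x ≤ 1 → w x = (1 + δ - sl (bpt θ₀) x)⁻¹) →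
      ∀ θ ∈ Set.Icc (θ₀ - π) (θ₀ + π),
        -h (bpt θ) * w (bpt θ) ≤ -(h (bpt θ₀) - η) * w (bpt θ) + M := by
  obtain ⟨H, hH0, hH⟩ := h_bound h hh
  obtain ⟨r0, hr0, hhr0⟩ := Metric.continuous_iff.mp hh θ₀ η hη
  have hpi := Real.pi_gt_three
  set r := min r0 1 with hrdef
  have hr : 0 < r := lt_min hr0 one_pos
  have hr1 : r ≤ 1 := min_le_right _ _
  have hcr : Real.cos r < 1 := by
    have := Real.cos_lt_cos_of_nonneg_of_le_pi le_rfl (by linarith : r ≤ π) hr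
    simpa using this
  refine ⟨(H + h (bpt θ₀)) * (1 - Real.cos r)⁻¹, fun δ hδ w hpos hval θ hθ => ?_⟩
  have hw0 := hpos (bpt θ)
  have hMn : 0 ≤ (H + h (bpt θ₀)) * (1 - Real.cos r)⁻¹ :=
    mul_nonneg (by linarith) (inv_nonneg.mpr (by linarith))
  rcases lt_or_ge (dist θ θ₀) r with hd | hd
  · have h1 := hhr0 θ (hd.trans_le (min_le_left _ _))
    rw [Real.dist_eq, abs_lt] at h1
    have := mul_le_mul_of_nonneg_right (by linarith [h1.1] : -h (bpt θ) ≤ -(h (bpt θ₀) - η)) hw0.le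
    linarith
  · rw [Real.dist_eq] at hd
    have h2 : |θ - θ₀| ≤ π := abs_le.mpr ⟨by linarith [hθ.1], by linarith [hθ.2]⟩
    have h3 : Real.cos (θ - θ₀) ≤ Real.cos r := by
      rw [← Real.cos_abs (θ - θ₀)]
      exact Real.cos_le_cos_of_nonneg_of_le_pi hr.le h2 hd
    have hw : w (bpt θ) ≤ (1 - Real.cos r)⁻¹ := by
      rw [hval _ (by rw [sl_bpt]; exact Real.cos_le_one _), sl_bpt]
      apply inv_anti₀ <;> linarith
    have h4 : -h (bpt θ) ≤ H := (neg_le_abs _).trans (hH θ)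
    have h5 : (-h (bpt θ) + h (bpt θ₀)) * w (bpt θ) ≤ (H + h (bpt θ₀)) * w (bpt θ) :=
      mul_le_mul_of_nonneg_right (by linarith) hw0.le
    have h6 : (H + h (bpt θ₀)) * w (bpt θ) ≤ (H + h (bpt θ₀)) * (1 - Real.cos r)⁻¹ :=
      mul_le_mul_of_nonneg_left hw (by linarith)
    have h7 := mul_pos hη hw0
    linarith

lemma test_fun (x₀ : ℂ) (h0 : ‖x₀‖ = 1) (α : ℝ) (hα : 0 < α) (w : ℂ → ℝ) (hw : ContDiff ℝ 1 w)
    (hpos : ∀ x, 0 < w x)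
    (hder : ∀ x, sl x₀ x < 1 → HasFDerivAt w ((w x ^ 2) • sl x₀) x) :
    ContDiff ℝ 1 (fun x => 2 * Real.log (α * w x)) ∧
    (∀ x, Real.exp (2 * Real.log (α * w x)) = α ^ 2 * w x ^ 2) ∧
    (∀ x, Real.exp (2 * Real.log (α * w x) / 2) = α * w x) ∧
    (∀ x ∈ unitDisk, gradSq (fun x => 2 * Real.log (α * w x)) x = 4 * w x ^ 2) := by
  have hp : ∀ x, 0 < α * w x := fun x => mul_pos hα (hpos x)
  refine ⟨?_, ?_, ?_, ?_⟩
  · exact contDiff_const.mul ((contDiff_const.mul hw).log fun x => (hp x).ne')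
  · intro x
    rw [two_mul, Real.exp_add, Real.exp_log (hp x)]; ring
  · intro x
    rw [mul_div_cancel_left₀ _ (two_ne_zero), Real.exp_log (hp x)]
  · intro x hx
    have h1 := hder x (disk_sub x₀ x h0 hx)
    have h2 := ((h1.const_mul α).log (hp x).ne').const_mul 2
    have h3 : x₀.re * x₀.re + x₀.im * x₀.im = 1 := by
      have := Complex.sq_norm x₀
      rw [h0, Complex.normSq_apply] at this
      linarith
    have hwx := (hpos x).ne'
    unfold gradSq pd
    rw [h2.fderiv]
    simp only [smul_apply, smul_eq_mul, sl_apply, Complex.one_re, Complex.one_im, Complex.I_re, Complex.I_im]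
    field_simp
    linear_combination 4 * h3

lemma log_bd (η y : ℝ) (hη : 0 < η) (hy : 0 < y) : Real.log y ≤ η * y + (-1 - Real.log η) := by
  have := Real.log_le_sub_one_of_pos (mul_pos hη hy)
  rw [Real.log_mul hη.ne' hy.ne'] at this
  linarith

lemma upper_est (K h : ℂ → ℝ) (hK : Continuous K) (hh : Continuous (fun θ => h (bpt θ))) (θ₀ : ℝ)
    (hK0 : K (bpt θ₀) < 0) (h0 : 0 ≤ h (bpt θ₀)) (α : ℝ) (hα : 0 < α) (hαK : α ^ 2 * (-K (bpt θ₀)) = 1)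
    (η : ℝ) (hη : 0 < η) :
    ∃ M : ℝ, ∀ δ : ℝ, 0 < δ → ∀ w : ℂ → ℝ, ContDiff ℝ 1 w → (∀ x, 0 < w x) →
      (∀ x, sl (bpt θ₀) x ≤ 1 → w x = (1 + δ - sl (bpt θ₀) x)⁻¹) →
      (∀ x, sl (bpt θ₀) x < 1 → HasFDerivAt w ((w x ^ 2) • sl (bpt θ₀)) x) →
      Ifun K h (fun x => 2 * Real.log (α * w x)) ≤
        ((4 + 2 * η * α ^ 2) * (1 + δ) - 4 * α * (h (bpt θ₀) - 2 * η)) * bint w + M := by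
  obtain ⟨M1, hM1⟩ := disk_bd K hK (bpt θ₀) (bpt_norm θ₀) hK0 η hη
  obtain ⟨M2, hM2⟩ := circ_bd h hh θ₀ h0 η hη
  have hpi := Real.pi_pos
  have hb := bpt_cont
  set L := -1 - Real.log η with hL
  refine ⟨(∫ _ in unitDisk, 2 * α ^ 2 * M1) + 2 * π * (4 * L + 4 * α * M2), ?_⟩
  intro δ hδ w hw hpos hval hder
  obtain ⟨t1, t2, t3, t4⟩ := test_fun (bpt θ₀) (bpt_norm θ₀) α hα w hw hpos hder
  have hwc := hw.continuous
  have hJ := J_eq θ₀ δ w hw hδ hval hder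
  have D1 : ∫ x in unitDisk, ((1/2) * gradSq (fun x => 2 * Real.log (α * w x)) x
      - 2 * K x * Real.exp (2 * Real.log (α * w x))) ≤
      (4 + 2 * η * α ^ 2) * (∫ x in unitDisk, w x ^ 2) + ∫ _ in unitDisk, 2 * α ^ 2 * M1 := by
    have e : ∫ x in unitDisk, ((1/2) * gradSq (fun x => 2 * Real.log (α * w x)) x
      - 2 * K x * Real.exp (2 * Real.log (α * w x))) =
        ∫ x in unitDisk, (2 * w x ^ 2 - 2 * K x * (α ^ 2 * w x ^ 2)) := by
      apply setIntegral_congr_fun measurableSet_ball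
      intro x hx
      beta_reduce
      rw [t4 x hx, t2 x]; ring
    rw [e, ← integral_const_mul, ← integral_add]
    · apply setIntegral_mono_on
      · exact intOn_disk (by fun_prop)
      · exact intOn_disk (by fun_prop)
      · exact measurableSet_ball
      · intro x hx
        have h1 := hM1 δ hδ w hpos hval x hx
        have h2 := mul_le_mul_of_nonneg_left h1 (by positivity : 0 ≤ 2 * α ^ 2)
        linear_combination h2 + 2 * w x ^ 2 * hαK
    · exact intOn_disk (by fun_prop)
    · exact intOn_disk (by fun_prop)
  have D2 : bint (fun x => 2 * (2 * Real.log (α * w x)) - 4 * h x * Real.exp (2 * Real.log (α * w x) / 2)) ≤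
      -(4 * α * (h (bpt θ₀) - 2 * η)) * bint w + 2 * π * (4 * L + 4 * α * M2) := by
    rw [bint_shift _ θ₀, bint_shift w θ₀]
    have cl : Continuous fun θ => 2 * Real.log (α * w (bpt θ)) := t1.continuous.comp hb
    have ce : Continuous fun θ => Real.exp (2 * Real.log (α * w (bpt θ)) / 2) :=
      (cl.div_const 2).rexp
    have c1 : Continuous fun θ => 2 * (2 * Real.log (α * w (bpt θ)))
        - 4 * h (bpt θ) * Real.exp (2 * Real.log (α * w (bpt θ)) / 2) :=
      (cl.const_mul 2).sub ((hh.const_mul 4).mul ce)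
    have c2 : Continuous fun θ => -(4 * α * (h (bpt θ₀) - 2 * η)) * w (bpt θ) := by fun_prop
    have e : -(4 * α * (h (bpt θ₀) - 2 * η)) * (∫ θ in (θ₀ - π)..(θ₀ + π), w (bpt θ))
        + 2 * π * (4 * L + 4 * α * M2) = ∫ θ in (θ₀ - π)..(θ₀ + π),
          (-(4 * α * (h (bpt θ₀) - 2 * η)) * w (bpt θ) + (4 * L + 4 * α * M2)) := by
      rw [intervalIntegral.integral_add (c2.intervalIntegrable _ _) (by simp),
        intervalIntegral.integral_const_mul, intervalIntegral.integral_const, smul_eq_mul]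
      ring
    rw [e]
    apply intervalIntegral.integral_mono_on (by linarith)
    · exact c1.intervalIntegrable _ _
    · exact (c2.add continuous_const).intervalIntegrable _ _
    · intro θ hθ
      have h1 := hM2 δ hδ w hpos hval θ hθ
      have h2 := mul_le_mul_of_nonneg_left h1 (by positivity : 0 ≤ 4 * α)
      have h3 := log_bd η (α * w (bpt θ)) hη (mul_pos hα (hpos _))
      rw [t3]
      linear_combination h2 + 4 * h3
  have h5 := mul_le_mul_of_nonneg_left hJ (by positivity : 0 ≤ 4 + 2 * η * α ^ 2)
  unfold Ifun
  linear_combination D1 + D2 + h5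

lemma I_unbounded (K h : ℂ → ℝ) (hK : Continuous K) (hh : Continuous (fun θ => h (bpt θ)))
    (hKneg : ∀ x ∈ closedUnitDisk, K x < 0) (x₀ : ℂ) (hx : x₀ ∈ unitCircle)
    (hx0 : Real.sqrt (-K x₀) < h x₀) (R : ℝ) :
    ∃ u : ℂ → ℝ, ContDiff ℝ 1 u ∧ 1 < bint (fun x => Real.exp (u x / 2)) ∧ Ifun K h u < -R := by
  have hn : ‖x₀‖ = 1 := by simpa [unitCircle] using hx
  obtain ⟨θ₀, rfl⟩ : ∃ θ₀, bpt θ₀ = x₀ := by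
    refine ⟨Complex.arg x₀, ?_⟩
    have := Complex.norm_mul_exp_arg_mul_I x₀
    rw [hn] at this
    simpa [bpt] using this
  have hK0 : K (bpt θ₀) < 0 := hKneg _ (by simp [closedUnitDisk, hn])
  set s := Real.sqrt (-K (bpt θ₀)) with hs
  have hspos : 0 < s := Real.sqrt_pos.mpr (by linarith)
  have hssq : s ^ 2 = -K (bpt θ₀) := Real.sq_sqrt (by linarith)
  set α := s⁻¹ with hαdef
  have hα : 0 < α := inv_pos.mpr hspos
  have hαs : α * s = 1 := inv_mul_cancel₀ hspos.ne'
  have hαK : α ^ 2 * (-K (bpt θ₀)) = 1 := by rw [← hssq, ← mul_pow, hαs, one_pow]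
  set κ := α * h (bpt θ₀) - 1 with hκ
  have hκ0 : 0 < κ := by
    have := mul_lt_mul_of_pos_left hx0 hα
    rw [hαs] at this; linarith
  set η := min (κ / (2 * α ^ 2)) (κ / (8 * α)) with hη
  have hη0 : 0 < η := lt_min (by positivity) (by positivity)
  have hη1 : 2 * η * α ^ 2 ≤ κ := by
    have := (le_div_iff₀ (by positivity)).mp (min_le_left (κ / (2 * α ^ 2)) (κ / (8 * α)))
    linarith
  have hη2 : 8 * η * α ≤ κ := by
    have := (le_div_iff₀ (by positivity)).mp (min_le_right (κ / (2 * α ^ 2)) (κ / (8 * α)))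
    linarith
  obtain ⟨M, hM⟩ := upper_est K h hK hh θ₀ hK0 (hspos.le.trans hx0.le) α hα hαK η hη0
  set P := max ((M + R) / κ) (1 / α) with hP
  have hP0 : 0 < P := lt_of_lt_of_le (by positivity) (le_max_right _ _)
  set δ := min (min (1/2) (κ / (4 + κ))) ((2 * (P + 1))⁻¹ ^ 2) with hδ
  have hδ0 : 0 < δ := lt_min (lt_min (by norm_num) (by positivity)) (by positivity)
  have hδ1 : δ < 1 := ((min_le_left _ _).trans (min_le_left _ _)).trans_lt (by norm_num)
  have hδ2 : (4 + κ) * δ ≤ κ := by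
    have h1 : δ ≤ κ / (4 + κ) := (min_le_left _ _).trans (min_le_right _ _)
    rw [le_div_iff₀ (by positivity)] at h1
    linarith
  have hδ3 : Real.sqrt δ ≤ (2 * (P + 1))⁻¹ := by
    rw [Real.sqrt_le_left (by positivity)]
    exact min_le_right _ _
  obtain ⟨w, hw, hpos, hval, hder⟩ := exists_w (bpt θ₀) δ hδ0
  have hB := B_large θ₀ δ hδ0 hδ1 w hw.continuous hpos hval
  have hsd : 0 < Real.sqrt δ := Real.sqrt_pos.mpr hδ0
  have hB1 : P < bint w := by
    have : P + 1 ≤ (2 * Real.sqrt δ)⁻¹ := by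
      rw [le_inv_comm₀ (by positivity) (by positivity)]
      rw [mul_inv] at hδ3
      linarith
    linarith
  obtain ⟨t1, t2, t3, t4⟩ := test_fun (bpt θ₀) (bpt_norm θ₀) α hα w hw hpos hder
  refine ⟨_, t1, ?_, ?_⟩
  · simp only [t3]
    have e : bint (fun x => α * w x) = α * bint w := by
      unfold bint; rw [intervalIntegral.integral_const_mul]
    rw [e]
    have := (div_lt_iff₀ hα).mp ((le_max_right ((M + R) / κ) (1 / α)).trans_lt hB1)
    linarith
  · have h1 := hM δ hδ0 w hw hpos hval hder
    have h2 := (div_lt_iff₀ hκ0).mp ((le_max_left ((M + R) / κ) (1 / α)).trans_lt hB1)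
    have h3 : (4 + 2 * η * α ^ 2) * (1 + δ) - 4 * α * (h (bpt θ₀) - 2 * η) ≤ -κ := by
      have h4 : (4 + 2 * η * α ^ 2) * (1 + δ) ≤ (4 + κ) * (1 + δ) :=
        mul_le_mul_of_nonneg_right (by linarith) (by linarith)
      have h5 : α * h (bpt θ₀) = κ + 1 := by rw [hκ]; ring
      have h6 : 4 * α * (h (bpt θ₀) - 2 * η) = 4 * (κ + 1) - 8 * η * α := by rw [← h5]; ring
      rw [h6]
      linarith
    have h7 := mul_le_mul_of_nonneg_right h3 (hP0.trans hB1).le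
    linarith

lemma u0_est (K h : ℂ → ℝ) (hK : Continuous K) (hh : Continuous (fun θ => h (bpt θ)))
    (R : ℝ) :
    ∃ m : ℝ, bint (fun _ => Real.exp (-m / 2)) < 1 ∧
      ∀ ε : ℝ, 0 < ε → ε * volume.real unitDisk ≤ 1 →
      Ifun K h (fun _ => -m) + ε * Tfun (fun _ => -m) < -R := by
  obtain ⟨H, hH0, hH⟩ := h_bound h hh
  have hpi := Real.pi_gt_three
  have hpi4 := Real.pi_lt_four
  set A := |∫ x in unitDisk, -2 * K x| with hA
  set m := 20 + A + 8 * π * H + |R| with hm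
  have hm20 : 20 ≤ m := by
    have := abs_nonneg R
    have : 0 ≤ A := abs_nonneg _
    have : 0 ≤ 8 * π * H := by positivity
    linarith
  have hgrad : ∀ x, gradSq (fun _ : ℂ => -m) x = 0 := by
    intro x; simp [gradSq, pd]
  have he1 : Real.exp (-m) ≤ 1 := by rw [Real.exp_le_one_iff]; linarith
  have he2 : Real.exp (-m / 2) ≤ 1 := by rw [Real.exp_le_one_iff]; linarith
  have hp1 := Real.exp_pos (-m)
  have hp2 := Real.exp_pos (-m / 2)
  refine ⟨m, ?_, fun ε hε hεV => ?_⟩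
  · unfold bint
    rw [intervalIntegral.integral_const, smul_eq_mul, neg_div, Real.exp_neg, sub_zero,
      ← div_eq_mul_inv, div_lt_one (Real.exp_pos _)]
    have := Real.add_one_le_exp (m / 2)
    linarith
  · have hT : Tfun (fun _ => -m) = (Real.exp (-m) + m) * volume.real unitDisk := by
      unfold Tfun
      simp only [hgrad, mul_zero, zero_add, sub_neg_eq_add]
      rw [setIntegral_const, smul_eq_mul, mul_comm]
    have hT2 : ε * Tfun (fun _ => -m) ≤ 1 + m := by
      rw [hT]
      have := mul_le_mul_of_nonneg_left hεV (by linarith : 0 ≤ Real.exp (-m) + m)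
      linarith
    have hI1 : ∫ x in unitDisk, ((1/2) * gradSq (fun _ => -m) x - 2 * K x * Real.exp (-m)) ≤ A := by
      have e : ∫ x in unitDisk, ((1/2) * gradSq (fun _ => -m) x - 2 * K x * Real.exp (-m)) =
          (∫ x in unitDisk, -2 * K x) * Real.exp (-m) := by
        rw [← integral_mul_const]
        congr 1; ext x; rw [hgrad]; ring
      rw [e]
      have h1 := mul_le_mul_of_nonneg_right (le_abs_self (∫ x in unitDisk, -2 * K x)) hp1.le
      have h2 := mul_le_mul_of_nonneg_left he1 (abs_nonneg (∫ x in unitDisk, -2 * K x))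
      linarith
    have hI2 : bint (fun x => 2 * (-m) - 4 * h x * Real.exp (-m / 2)) ≤ 2 * π * (-2 * m + 4 * H) := by
      have e : 2 * π * (-2 * m + 4 * H) = ∫ θ in (0:ℝ)..(2 * π), (-2 * m + 4 * H) := by
        rw [intervalIntegral.integral_const, smul_eq_mul, sub_zero]
      rw [e]
      unfold bint
      have c1 : Continuous fun θ => 2 * (-m) - 4 * h (bpt θ) * Real.exp (-m / 2) :=
        continuous_const.sub ((hh.const_mul 4).mul continuous_const)
      apply intervalIntegral.integral_mono_on (by linarith)
      · exact c1.intervalIntegrable _ _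
      · simp
      · intro θ _
        have h1 := mul_le_mul_of_nonneg_right ((neg_le_abs _).trans (hH θ)) hp2.le
        have h2 := mul_le_mul_of_nonneg_left he2 hH0
        linarith
    have hmm : 3 * m ≤ π * m := mul_le_mul_of_nonneg_right hpi.le (by linarith)
    have hR := le_abs_self R
    unfold Ifun
    linarith

/-- Proposition: mountain-pass geometry of I_ε for small ε > 0. -/
theorem mountain_pass_geometry
    (K h : ℂ → ℝ)
    (hK : ContDiff ℝ 2 K)
    (hKneg : ∀ x ∈ closedUnitDisk, K x < 0)
    (hh : ContDiff ℝ 2 (fun θ => h (bpt θ)))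
    (hx0 : ∃ x₀ ∈ unitCircle, Real.sqrt (-K x₀) < h x₀) :
    ∃ ε₀ > (0:ℝ), ∀ ε ∈ Set.Ioo 0 ε₀, ∃ u₀ u₁ : ℂ → ℝ,
      ContDiff ℝ 1 u₀ ∧ ContDiff ℝ 1 u₁ ∧
      bint (fun x => Real.exp (u₀ x / 2)) < 1 ∧
      1 < bint (fun x => Real.exp (u₁ x / 2)) ∧
      -- max{I_ε(u₀), I_ε(u₁)} < inf{ I_ε(u) : ∫_{∂𝔻} e^{u/2} = 1 }
      ∃ c : ℝ, max (Ieps K h ε u₀) (Ieps K h ε u₁) < c ∧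
        ∀ u : ℂ → ℝ, ContDiff ℝ 1 u → bint (fun x => Real.exp (u x / 2)) = 1 →
          c ≤ Ieps K h ε u := by
  obtain ⟨x₀, hx, hlt⟩ := hx0
  obtain ⟨C, hC⟩ := lower_bound K h hK.continuous hKneg hh.continuous
  obtain ⟨u₁, hu₁, hb₁, hI₁⟩ := I_unbounded K h hK.continuous hh.continuous hKneg x₀ hx hlt (C + 1)
  obtain ⟨m, hm, hI₀⟩ := u0_est K h hK.continuous hh.continuous C
  have hT := T_nonneg u₁
  have hV : 0 ≤ volume.real unitDisk := measureReal_nonneg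
  refine ⟨min (1 / (Tfun u₁ + 1)) (1 / (volume.real unitDisk + 1)),
    lt_min (by positivity) (by positivity), fun ε hε => ?_⟩
  obtain ⟨hε0, hε1⟩ := hε
  have e1 := (lt_div_iff₀ (by positivity)).mp (hε1.trans_le (min_le_left _ _))
  have e2 := (lt_div_iff₀ (by positivity)).mp (hε1.trans_le (min_le_right _ _))
  have hp : 0 < 1 + ε := by linarith
  refine ⟨fun _ => -m, u₁, contDiff_const, hu₁, hm, hb₁, -C / (1 + ε), ?_, ?_⟩
  · apply max_lt
    · exact div_lt_div_of_pos_right (hI₀ ε hε0 (by linarith)) hp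
    · exact div_lt_div_of_pos_right (by linarith) hp
  · intro u hu h1
    have := mul_nonneg hε0.le (T_nonneg u)
    have := hC u hu h1
    exact div_le_div_of_nonneg_right (by linarith) hp.le

end
end
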